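/- Let (Ω, 𝒜, μ) be a σ-finite measure space, 1 ≤ p < ∞, and T₁,…,T_d a commuting family of positive Dunford–Schwartz operators. Then for every f ∈ L^p(μ) and every sequence n(k) ∈ ℕ^d with n(k) → ∞ that remains in a sector of ℕ^d, the averages A_{n(k)}(f) converge almost uniformly as k → ∞ to some f̂ ∈ L^p(μ). -/

import Mathlib

open MeasureTheory Filter Set ENNReal Topology

variable {Ω : Type*} [MeasurableSpace Ω]

/-- `f` belongs to `L¹(μ) + L^∞(μ)`. -/
def MemL1pLinf (μ : Measure Ω) (f : Ω →ₘ[μ] ℝ) : Prop :=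
  ∃ g h : Ω →ₘ[μ] ℝ, eLpNorm g 1 μ ≠ ∞ ∧ eLpNorm h ⊤ μ ≠ ∞ ∧ f = g + h

/-- A positive Dunford–Schwartz operator: linear and positive on `L¹+L^∞`,
contracting both the `L¹`- and `L^∞`-norms. -/
structure IsPosDS (μ : Measure Ω) (T : (Ω →ₘ[μ] ℝ) → (Ω →ₘ[μ] ℝ)) : Prop where
  map_add : ∀ f g, MemL1pLinf μ f → MemL1pLinf μ g → T (f + g) = T f + T g
  map_smul : ∀ (c : ℝ) (f), MemL1pLinf μ f → T (c • f) = c • T f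
  map_pos : ∀ f, MemL1pLinf μ f → 0 ≤ f → 0 ≤ T f
  norm_one : ∀ f, MemL1pLinf μ f → eLpNorm (T f) 1 μ ≤ eLpNorm f 1 μ
  norm_top : ∀ f, MemL1pLinf μ f → eLpNorm (T f) ⊤ μ ≤ eLpNorm f ⊤ μ

/-- The Cesàro averages `A_n(f) = (1/n) ∑_{k<n} T^k f`. -/
noncomputable def cesaro (μ : Measure Ω) (T : (Ω →ₘ[μ] ℝ) → (Ω →ₘ[μ] ℝ)) (n : ℕ)
    (f : Ω →ₘ[μ] ℝ) : Ω →ₘ[μ] ℝ :=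
  (n : ℝ)⁻¹ • ∑ k ∈ Finset.range n, T^[k] f

/-- Almost uniform convergence of a net `F` to `f`. -/
def AuTendsto {ι : Type*} (μ : Measure Ω) (l : Filter ι) (F : ι → Ω →ₘ[μ] ℝ)
    (f : Ω →ₘ[μ] ℝ) : Prop :=
  ∀ ε : ℝ, 0 < ε → ∃ E : Set Ω, MeasurableSet E ∧ μ Eᶜ ≤ ENNReal.ofReal ε ∧
    Tendsto (fun i => eLpNorm (E.indicator (⇑(F i - f))) ⊤ μ) l (𝓝 0)

/-- `R_μ`: elements of `L¹+L^∞` whose distribution tails are finite. -/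
def MemRmu (μ : Measure Ω) (f : Ω →ₘ[μ] ℝ) : Prop :=
  MemL1pLinf μ f ∧ ∀ lam : ℝ, 0 < lam → μ {ω | lam < |f ω|} < ∞

/-- `T₁^{k₁} ∘ ⋯ ∘ T_d^{k_d}` for a family `T` of operators. -/
def iterComp {E : Type*} {d : ℕ} (T : Fin d → E → E) (k : Fin d → ℕ) : E → E :=
  (List.ofFn fun i => (T i)^[k i]).foldr (· ∘ ·) id

/-- The multiparameter averages
`A_n(f) = (n₁⋯n_d)⁻¹ ∑_{i₁<n₁} ⋯ ∑_{i_d<n_d} T₁^{i₁}⋯T_d^{i_d} f`. -/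
noncomputable def multiAvg (μ : Measure Ω) {d : ℕ}
    (T : Fin d → (Ω →ₘ[μ] ℝ) → (Ω →ₘ[μ] ℝ)) (n : Fin d → ℕ)
    (f : Ω →ₘ[μ] ℝ) : Ω →ₘ[μ] ℝ :=
  (∏ i, (n i : ℝ))⁻¹ •
    ∑ k ∈ Fintype.piFinset (fun i => Finset.range (n i)), iterComp T k f

/-- A sequence `n(k) ∈ ℕ^d` remains in a sector of `ℕ^d`. -/
def InSector {d : ℕ} (n : ℕ → Fin d → ℕ) : Prop :=
  ∃ c₀ : ℝ, ∀ k, ∀ i j, n k j ≠ 0 → (n k i : ℝ) / (n k j : ℝ) ≤ c₀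

/-!
Brunel's trick reduces the `d` commuting operators to one. Take the heavy-tailed distribution on `ℕ`
that mixes the uniform distributions on `{0, …, 2 ^ k - 1}` with geometric weights of ratio `r`, and
let `S` be the positive Dunford–Schwartz operator obtained by averaging the monomials in
`T₁, …, T_d` over `d` independent samples of it. When `r` is so close to `1` that `2 * r ^ d ≥ 1`,
about `r ^ (-K)` convolution powers charge the cube of side `2 ^ K` so evenly that its averages are
at most a constant times Cesàro averages of `S`. The sector condition compares every box with such a
cube, so Hopf's maximal ergodic theorem for `S` makes the maximal operator of the averages of weak
type `(1, 1)`, and truncation makes it of weak type `(p, p)`.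

By Banach's principle the `f ∈ L^p` whose averages are almost uniformly Cauchy form a closed
subspace. In `L²` it contains the common fixed vectors and the coboundaries `f - T_i f`, whose
averages telescope to `0` uniformly when `f` is bounded; as the `T_i` are contractions, these span a
dense subspace. Hence indicators of sets of finite measure have almost uniformly Cauchy averages,
and they span a dense subspace of `L^p` for every `p < ∞`.
-/

section BrunelDistribution

open Polynomial

/-- The semiring of real polynomials with nonnegative coefficients. Evaluated at an operator, these
give the positive combinations of its powers. -/
def nonnegCoeff : Subsemiring ℝ[X] where
  carrier := {p | ∀ n, 0 ≤ p.coeff n}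
  mul_mem' hp hq n := by
    rw [coeff_mul]
    exact Finset.sum_nonneg fun _ _ => mul_nonneg (hp _) (hq _)
  one_mem' n := by rw [coeff_one]; split_ifs <;> norm_num
  add_mem' hp hq n := by rw [coeff_add]; exact add_nonneg (hp n) (hq n)
  zero_mem' _ := by simp

theorem C_mem_nonnegCoeff {c : ℝ} (hc : 0 ≤ c) : C c ∈ nonnegCoeff := fun n => by
  rw [coeff_C]; split_ifs <;> simp [hc]

theorem eval_one_eq_sum_coeff {q : ℝ[X]} {N : ℕ} (hN : q.natDegree < N) :
    q.eval 1 = ∑ s ∈ Finset.range N, q.coeff s := by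
  simp [eval_eq_sum_range' hN]

theorem eval_one_derivative_eq_sum_coeff {q : ℝ[X]} {N : ℕ} (hN : q.natDegree < N) :
    (derivative q).eval 1 = ∑ s ∈ Finset.range N, q.coeff s * s := by
  rw [derivative_eval, sum_over_range' _ (by simp) N hN]
  simp

theorem eval_one_derivative_nonneg {q : ℝ[X]} (hq : q ∈ nonnegCoeff) :
    0 ≤ (derivative q).eval 1 := by
  rw [eval_one_derivative_eq_sum_coeff (Nat.lt_succ_self _)]
  exact Finset.sum_nonneg fun s _ => mul_nonneg (hq s) s.cast_nonneg

/-- Markov's inequality for the measure with masses `q.coeff`, whose mean is `q'(1)`. -/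
theorem eval_one_sub_derivative_div_le_sum_coeff {q : ℝ[X]} (hq : q ∈ nonnegCoeff) (n : ℕ) :
    q.eval 1 - (derivative q).eval 1 / (n + 1) ≤ ∑ s ∈ Finset.range (n + 1), q.coeff s := by
  obtain ⟨N, hqN, hnN⟩ : ∃ N, q.natDegree < N ∧ n + 1 ≤ N :=
    ⟨max (q.natDegree + 1) (n + 1), by omega, by omega⟩
  have htail : ∑ s ∈ Finset.Ico (n + 1) N, q.coeff s
      ≤ (∑ s ∈ Finset.range N, q.coeff s * s) / (n + 1) := by
    rw [le_div_iff₀ (by positivity), Finset.sum_mul]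
    refine (Finset.sum_le_sum fun s hs => ?_).trans (Finset.sum_le_sum_of_subset_of_nonneg
      (fun s hs => Finset.mem_range.2 (Finset.mem_Ico.1 hs).2)
      fun s _ _ => mul_nonneg (hq s) s.cast_nonneg)
    exact mul_le_mul_of_nonneg_left (mod_cast (Finset.mem_Ico.1 hs).1) (hq s)
  rw [eval_one_eq_sum_coeff hqN, eval_one_derivative_eq_sum_coeff hqN,
    ← Finset.sum_range_add_sum_Ico _ hnN]
  rw [← Finset.sum_range_add_sum_Ico _ hnN] at htail ⊢
  linarith

theorem coeff_mul_pow_le_coeff_add_pow {w a : ℝ[X]} (hw : w ∈ nonnegCoeff) (ha : a ∈ nonnegCoeff)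
    (j n : ℕ) : (j + 1) * (a * w ^ j).coeff n ≤ ((w + a) ^ (j + 1)).coeff n := by
  have hterm : (j + 1) * (a * w ^ j).coeff n
      = (w ^ j * a ^ (j + 1 - j) * ((j + 1).choose j : ℝ[X])).coeff n := by
    rw [Nat.choose_succ_self_right, Nat.add_sub_cancel_left, pow_one, ← C_eq_natCast, coeff_mul_C,
      mul_comm a]
    push_cast
    ring
  rw [add_pow, finsetSum_coeff, hterm]
  exact Finset.single_le_sum (f := fun m => (w ^ m * a ^ (j + 1 - m) *
      ((j + 1).choose m : ℝ[X])).coeff n)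
    (fun m _ => mul_mem (mul_mem (pow_mem hw _) (pow_mem ha _)) (natCast_mem _ _) n)
    (Finset.mem_range.2 (by omega))

/-- The polynomial `(1 + X + ⋯ + X ^ (n - 1)) / n`, whose value at an operator is its `n`-th Cesàro
average. -/
noncomputable def cesaroPoly (n : ℕ) : ℝ[X] :=
  C (n : ℝ)⁻¹ * ∑ m ∈ Finset.range n, X ^ m

theorem coeff_cesaroPoly (n m : ℕ) : (cesaroPoly n).coeff m = if m < n then (n : ℝ)⁻¹ else 0 := by
  simp [cesaroPoly, coeff_X_pow]

theorem cesaroPoly_mem_nonnegCoeff (n : ℕ) : cesaroPoly n ∈ nonnegCoeff := fun m => by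
  rw [coeff_cesaroPoly]; split_ifs <;> positivity

theorem eval_one_cesaroPoly {n : ℕ} (hn : n ≠ 0) : (cesaroPoly n).eval 1 = 1 := by
  simp [cesaroPoly, eval_finsetSum, hn]

theorem eval_one_cesaroPoly_le_one (n : ℕ) : (cesaroPoly n).eval 1 ≤ 1 := by
  obtain rfl | hn := eq_or_ne n 0
  · simp [cesaroPoly]
  · exact (eval_one_cesaroPoly hn).le

theorem eval_one_derivative_cesaroPoly_le (n : ℕ) :
    (derivative (cesaroPoly n)).eval 1 ≤ n / 2 := by
  have hsum (m : ℕ) : ∑ i ∈ Finset.range m, (i : ℝ) ≤ m * (m / 2) := by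
    induction m with
    | zero => simp
    | succ m ih => rw [Finset.sum_range_succ]; push_cast; linarith
  calc (derivative (cesaroPoly n)).eval 1
      = (n : ℝ)⁻¹ * ∑ i ∈ Finset.range n, (i : ℝ) := by
        simp [cesaroPoly, eval_finsetSum, derivative_X_pow]
    _ ≤ (n : ℝ)⁻¹ * (n * (n / 2)) := by gcongr; exact hsum n
    _ ≤ n / 2 := by
        rw [← mul_assoc]
        exact mul_le_of_le_one_left (by positivity) (inv_mul_le_one)

theorem coeff_cesaroPoly_mul {N n : ℕ} (hn : n < N) (q : ℝ[X]) :
    (cesaroPoly N * q).coeff n = (N : ℝ)⁻¹ * ∑ s ∈ Finset.range (n + 1), q.coeff s := by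
  rw [mul_comm, coeff_mul, Finset.Nat.sum_antidiagonal_eq_sum_range_succ_mk, Finset.mul_sum]
  refine Finset.sum_congr rfl fun s _ => ?_
  rw [coeff_cesaroPoly, if_pos (by omega), mul_comm]

/-- The generating polynomial of Brunel's heavy-tailed distribution: the mixture, with geometric
weights `(1 - r) r ^ k`, of the uniform distributions on the dyadic blocks `{0, …, 2 ^ k - 1}`,
cut off at `k < M`. -/
noncomputable def brunelPoly (r : ℝ) (M : ℕ) : ℝ[X] :=
  ∑ k ∈ Finset.range M, C ((1 - r) * r ^ k) * cesaroPoly (2 ^ k)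

section

variable {r : ℝ}

theorem brunelPoly_succ (M : ℕ) :
    brunelPoly r (M + 1) = brunelPoly r M + C ((1 - r) * r ^ M) * cesaroPoly (2 ^ M) :=
  Finset.sum_range_succ _ _

theorem sum_brunelPoly_terms_mem_nonnegCoeff (h0 : 0 ≤ r) (h1 : r ≤ 1) (s : Finset ℕ) :
    ∑ k ∈ s, C ((1 - r) * r ^ k) * cesaroPoly (2 ^ k) ∈ nonnegCoeff :=
  sum_mem fun k _ => mul_mem
    (C_mem_nonnegCoeff (mul_nonneg (sub_nonneg.2 h1) (pow_nonneg h0 k)))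
    (cesaroPoly_mem_nonnegCoeff _)

theorem brunelPoly_mem_nonnegCoeff (h0 : 0 ≤ r) (h1 : r ≤ 1) (M : ℕ) :
    brunelPoly r M ∈ nonnegCoeff :=
  sum_brunelPoly_terms_mem_nonnegCoeff h0 h1 _

theorem eval_one_brunelPoly (r : ℝ) (M : ℕ) : (brunelPoly r M).eval 1 = 1 - r ^ M := by
  induction M with
  | zero => simp [brunelPoly]
  | succ M ih =>
    rw [brunelPoly_succ, eval_add, ih, eval_C_mul, eval_one_cesaroPoly (by positivity)]
    ring

theorem eval_one_derivative_brunelPoly_le (h0 : 3 / 4 ≤ r) (h1 : r ≤ 1) (M : ℕ) :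
    (derivative (brunelPoly r M)).eval 1 ≤ (2 * r) ^ M / 4 := by
  induction M with
  | zero => simp [brunelPoly]
  | succ M ih =>
    have hblock : (1 - r) * r ^ M * (derivative (cesaroPoly (2 ^ M))).eval 1
        ≤ (1 - r) * r ^ M * (2 ^ M / 2) :=
      mul_le_mul_of_nonneg_left (mod_cast eval_one_derivative_cesaroPoly_le (2 ^ M))
        (mul_nonneg (by linarith) (pow_nonneg (by linarith) _))
    have hpow : (0 : ℝ) ≤ (2 * r) ^ M := pow_nonneg (by linarith) _
    rw [brunelPoly_succ, derivative_add, eval_add, derivative_C_mul, eval_C_mul]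
    calc _ ≤ (2 * r) ^ M / 4 + (1 - r) * r ^ M * (2 ^ M / 2) := add_le_add ih hblock
      _ = (3 / 4 - r / 2) * (2 * r) ^ M := by rw [mul_pow]; ring
      _ ≤ r / 2 * (2 * r) ^ M := mul_le_mul_of_nonneg_right (by linarith) hpow
      _ = (2 * r) ^ (M + 1) / 4 := by ring

theorem two_pow_size_le (n : ℕ) : 2 ^ n.size ≤ 2 * (n + 1) := by
  cases hk : n.size with
  | zero => omega
  | succ k =>
    have : 2 ^ k ≤ n := Nat.lt_size.1 (by omega)
    rw [pow_succ]
    omega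

/-- A sum of `j ≤ r ^ (-K) / 3` variables with the distribution truncated to blocks `k < K` keeps
most of its mass and has mean at most a fraction of `2 ^ K`. -/
theorem half_le_sum_coeff_brunelPoly_pow (h0 : 3 / 4 ≤ r) (h1 : r ≤ 1) {n j : ℕ}
    (hj : j * r ^ n.size ≤ 1 / 3) :
    1 / 2 ≤ ∑ s ∈ Finset.range (n + 1), (brunelPoly r n.size ^ j).coeff s := by
  have hr0 : 0 ≤ r := by linarith
  have hw := brunelPoly_mem_nonnegCoeff hr0 h1 n.size
  have hpow0 : 0 ≤ r ^ n.size := pow_nonneg hr0 _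
  have hpow1 : r ^ n.size ≤ 1 := pow_le_one₀ hr0 h1
  have hmass : 1 - j * r ^ n.size ≤ (1 - r ^ n.size) ^ j := by
    simpa [← sub_eq_add_neg] using one_add_mul_le_pow (a := -r ^ n.size) (by linarith) j
  have hmean : (derivative (brunelPoly r n.size ^ j)).eval 1 ≤ j * ((2 * r) ^ n.size / 4) := by
    rw [derivative_pow, eval_mul, eval_mul, eval_pow, eval_C, eval_one_brunelPoly, mul_assoc]
    gcongr
    exact (mul_le_of_le_one_left (eval_one_derivative_nonneg hw)
      (pow_le_one₀ (by linarith) (by linarith))).trans (eval_one_derivative_brunelPoly_le h0 h1 _)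
  have hsize : (2 : ℝ) ^ n.size ≤ 2 * (n + 1) := mod_cast two_pow_size_le n
  have hmean' : (derivative (brunelPoly r n.size ^ j)).eval 1 / (n + 1) ≤ j * r ^ n.size / 2 := by
    rw [div_le_iff₀ (by positivity)]
    calc _ ≤ j * ((2 * r) ^ n.size / 4) := hmean
      _ = j * r ^ n.size / 4 * 2 ^ n.size := by rw [mul_pow]; ring
      _ ≤ j * r ^ n.size / 4 * (2 * (n + 1)) := by gcongr
      _ = _ := by ring
  have hmarkov := eval_one_sub_derivative_div_le_sum_coeff (pow_mem hw j) n
  rw [eval_pow, eval_one_brunelPoly] at hmarkov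
  linarith

/-- One of the `j + 1` variables is taken in the block of size `2 ^ n.size`, the others in smaller
blocks. -/
theorem le_coeff_brunelPoly_pow (h0 : 3 / 4 ≤ r) (h1 : r ≤ 1) {M n j : ℕ} (hM : n.size < M)
    (hj : j * r ^ n.size ≤ 1 / 3) :
    (j + 1) * ((1 - r) / 2 * (r / 2) ^ n.size) ≤ (brunelPoly r M ^ (j + 1)).coeff n := by
  have hr0 : 0 ≤ r := by linarith
  set w := brunelPoly r n.size
  set a := C ((1 - r) * r ^ n.size) * cesaroPoly (2 ^ n.size)
  set b := ∑ k ∈ Finset.Ico (n.size + 1) M, C ((1 - r) * r ^ k) * cesaroPoly (2 ^ k)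
  have hw : w ∈ nonnegCoeff := brunelPoly_mem_nonnegCoeff hr0 h1 _
  have hb : b ∈ nonnegCoeff := sum_brunelPoly_terms_mem_nonnegCoeff hr0 h1 _
  have ha : a ∈ nonnegCoeff := mul_mem (C_mem_nonnegCoeff
    (mul_nonneg (sub_nonneg.2 h1) (pow_nonneg hr0 _))) (cesaroPoly_mem_nonnegCoeff _)
  have hsplit : brunelPoly r M = w + (a + b) := by
    simp only [brunelPoly, w, a, b]
    rw [← Finset.sum_range_add_sum_Ico _ hM.le, Finset.sum_eq_sum_Ico_succ_bot hM]
  have hcoeff : (1 - r) / 2 * (r / 2) ^ n.size ≤ (a * w ^ j).coeff n := by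
    simp only [a]
    rw [mul_assoc, coeff_C_mul, coeff_cesaroPoly_mul n.lt_size_self]
    calc (1 - r) / 2 * (r / 2) ^ n.size
        = (1 - r) * r ^ n.size * (((2 ^ n.size : ℕ) : ℝ)⁻¹ * (1 / 2)) := by
          push_cast; rw [div_pow]; ring
      _ ≤ _ := by
          have := sub_nonneg.2 h1
          gcongr
          exact half_le_sum_coeff_brunelPoly_pow h0 h1 hj
  calc (j + 1) * ((1 - r) / 2 * (r / 2) ^ n.size)
      ≤ (j + 1) * ((a + b) * w ^ j).coeff n := by
        gcongr
        rw [add_mul, coeff_add]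
        exact hcoeff.trans (le_add_of_nonneg_right (mul_mem hb (pow_mem hw j) n))
    _ ≤ _ := by rw [hsplit]; exact coeff_mul_pow_le_coeff_add_pow hw (add_mem ha hb) j n

/-- The number of convolution powers of Brunel's distribution that reach scale `2 ^ K` with a mean
staying below a fraction of it. -/
noncomputable def brunelLength (r : ℝ) (K : ℕ) : ℕ := ⌊(r ^ K)⁻¹ / 3⌋₊ + 1

theorem inv_pow_div_three_le_brunelLength (r : ℝ) (K : ℕ) :
    (r ^ K)⁻¹ / 3 ≤ brunelLength r K := by
  simpa [brunelLength] using (Nat.lt_floor_add_one _).le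

theorem brunelLength_succ_le (h0 : 0 < r) (h1 : r ≤ 1) (K : ℕ) :
    ((brunelLength r K + 1 : ℕ) : ℝ) ≤ 3 * (r ^ K)⁻¹ := by
  have hfloor := Nat.floor_le (a := (r ^ K)⁻¹ / 3) (by positivity)
  have hone : 1 ≤ (r ^ K)⁻¹ := one_le_inv₀ (by positivity) |>.2 (pow_le_one₀ h0.le h1)
  rw [brunelLength]
  push_cast
  linarith

theorem brunelLength_mono (h0 : 0 < r) (h1 : r ≤ 1) : Monotone (brunelLength r) := fun m K hmK => by
  unfold brunelLength
  gcongr ⌊?_ / 3⌋₊ + 1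
  exact inv_anti₀ (by positivity) (pow_le_pow_of_le_one h0.le h1 hmK)

theorem mul_pow_le_of_lt_brunelLength (h0 : 0 < r) {K j : ℕ} (hj : j < brunelLength r K) :
    j * r ^ K ≤ 1 / 3 := by
  have : (j : ℝ) ≤ (r ^ K)⁻¹ / 3 :=
    (Nat.cast_le.2 (Nat.lt_succ_iff.1 hj)).trans (Nat.floor_le (by positivity))
  calc (j : ℝ) * r ^ K ≤ (r ^ K)⁻¹ / 3 * r ^ K := by gcongr
    _ = 1 / 3 := by field_simp

theorem pow_div_le_sum_succ_pow (d J : ℕ) :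
    (J : ℝ) ^ (d + 1) / 2 ^ d ≤ ∑ j ∈ Finset.range J, ((j : ℝ) + 1) ^ d := by
  obtain rfl | hJ := J.eq_zero_or_pos
  · simp
  have hsum : ∀ m : ℕ, (m : ℝ) * m / 2 ≤ ∑ j ∈ Finset.range m, ((j : ℝ) + 1) := by
    intro m
    induction m with
    | zero => simp
    | succ m ih => rw [Finset.sum_range_succ]; push_cast; nlinarith
  cases d with
  | zero => simp
  | succ d =>
    have : (0 : ℝ) < J := mod_cast hJ
    calc (J : ℝ) ^ (d + 1 + 1) / 2 ^ (d + 1) = (J * J / 2) ^ (d + 1) / J ^ d := by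
          rw [div_pow, mul_pow]; field_simp; ring
      _ ≤ (∑ j ∈ Finset.range J, ((j : ℝ) + 1)) ^ (d + 1) / J ^ d := by gcongr; exact hsum J
      _ ≤ _ := by
        simpa using pow_sum_div_card_le_sum_pow (s := Finset.range J)
          (f := fun j => (j : ℝ) + 1) (fun j _ => by positivity) d

section MultiIndex

variable {ι : Type*} [Fintype ι]

theorem le_prod_coeff_brunelPoly_pow (h0 : 3 / 4 ≤ r) (h1 : r ≤ 1) {M m j : ℕ} {x : ι → ℕ}
    (hM : ∀ i, (x i).size < M) (hm : ∀ i, m ≤ (x i).size) (hj : j < brunelLength r m) :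
    ((j : ℝ) + 1) ^ Fintype.card ι * ((1 - r) / 2) ^ Fintype.card ι * ∏ i, (r / 2) ^ (x i).size
      ≤ ∏ i, (brunelPoly r M ^ (j + 1)).coeff (x i) := by
  have hr0 : 0 < r := by linarith
  have := sub_nonneg.2 h1
  calc _ = ∏ i, ((j : ℝ) + 1) * ((1 - r) / 2 * (r / 2) ^ (x i).size) := by
        simp only [Finset.prod_mul_distrib, Finset.prod_const, Finset.card_univ, mul_assoc]
    _ ≤ _ := Finset.prod_le_prod (fun i _ => by positivity) fun i _ =>
        le_coeff_brunelPoly_pow h0 h1 (hM i) <| by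
          refine le_trans ?_ (mul_pow_le_of_lt_brunelLength hr0 hj)
          gcongr ?_ * ?_
          exact pow_le_pow_of_le_one hr0.le h1 (hm i)

theorem mul_pow_card_sub_one_le_prod_pow {a : ℝ} (h0 : 0 ≤ a) (h1 : a ≤ 1) {K : ℕ} {s : ι → ℕ}
    (hs : ∀ i, s i ≤ K) (i₀ : ι) :
    a ^ s i₀ * (a ^ K) ^ (Fintype.card ι - 1) ≤ ∏ i, a ^ s i := by
  classical
  rw [← Finset.mul_prod_erase Finset.univ _ (Finset.mem_univ i₀), ← Finset.card_univ,
    ← Finset.card_erase_of_mem (Finset.mem_univ i₀), ← Finset.prod_const]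
  exact mul_le_mul_of_nonneg_left (Finset.prod_le_prod (fun i _ => by positivity)
    fun i _ => pow_le_pow_of_le_one h0 h1 (hs i)) (by positivity)

/-- The quotient of the two sides is `(2 * r ^ d) ^ (K - m)`. -/
theorem inv_pow_mul_le_of_half_le_pow {d m K : ℕ} (h0 : 0 < r) (hd : d ≠ 0)
    (hrd : 1 / 2 ≤ r ^ d) (hmK : m ≤ K) :
    (r ^ K)⁻¹ * ((2 ^ K) ^ d)⁻¹
      ≤ ((r ^ m)⁻¹) ^ (d + 1) * ((r / 2) ^ m * ((r / 2) ^ K) ^ (d - 1)) := by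
  obtain ⟨e, rfl⟩ := Nat.exists_eq_succ_of_ne_zero hd
  obtain ⟨t, rfl⟩ := Nat.exists_eq_add_of_le hmK
  have hratio : 1 ≤ (2 * r ^ (e + 1)) ^ t := one_le_pow₀ (by
    rw [Nat.succ_eq_add_one] at hrd; linarith)
  calc _ ≤ (r ^ (m + t))⁻¹ * ((2 ^ (m + t)) ^ (e + 1))⁻¹ * (2 * r ^ (e + 1)) ^ t :=
        le_mul_of_one_le_right (by positivity) hratio
    _ = _ := by
        simp only [Nat.succ_eq_add_one, Nat.add_sub_cancel, div_pow, mul_pow, inv_pow]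
        field_simp
        ring

theorem exists_le_sum_prod_coeff_brunelPoly_pow [Nonempty ι] (h0 : 3 / 4 ≤ r) (h1 : r < 1)
    (hrd : 1 / 2 ≤ r ^ Fintype.card ι) :
    ∃ c > 0, ∀ {M K : ℕ}, K < M → ∀ x : ι → ℕ, (∀ i, x i < 2 ^ K) →
      c * (r ^ K)⁻¹ * ((2 ^ K) ^ Fintype.card ι)⁻¹ ≤
        ∑ j ∈ Finset.range (brunelLength r K), ∏ i, (brunelPoly r M ^ (j + 1)).coeff (x i) := by
  set d := Fintype.card ι with hd
  have hr0 : 0 < r := by linarith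
  have hr1 : 0 < 1 - r := by linarith
  refine ⟨(1 / 3) ^ (d + 1) / 2 ^ d * ((1 - r) / 2) ^ d, by positivity, fun {M K} hKM x hx => ?_⟩
  obtain ⟨i₀, hi₀⟩ := Finite.exists_min fun i => (x i).size
  have hsize : ∀ i, (x i).size ≤ K := fun i => Nat.size_le.2 (hx i)
  set m := (x i₀).size
  have hcoeff : ∀ j, 0 ≤ ∏ i, (brunelPoly r M ^ (j + 1)).coeff (x i) := fun j =>
    Finset.prod_nonneg fun i _ => pow_mem (brunelPoly_mem_nonnegCoeff hr0.le h1.le M) _ _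
  calc (1 / 3) ^ (d + 1) / 2 ^ d * ((1 - r) / 2) ^ d * (r ^ K)⁻¹ * ((2 ^ K) ^ d)⁻¹
      = (1 / 3) ^ (d + 1) / 2 ^ d * ((1 - r) / 2) ^ d * ((r ^ K)⁻¹ * ((2 ^ K) ^ d)⁻¹) := by ring
    _ ≤ (1 / 3) ^ (d + 1) / 2 ^ d * ((1 - r) / 2) ^ d *
          (((r ^ m)⁻¹) ^ (d + 1) * ((r / 2) ^ m * ((r / 2) ^ K) ^ (d - 1))) := by
        gcongr ?_ * ?_
        exact inv_pow_mul_le_of_half_le_pow hr0 Fintype.card_ne_zero hrd (hsize i₀)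
    _ = ((r ^ m)⁻¹ / 3) ^ (d + 1) / 2 ^ d * ((1 - r) / 2) ^ d *
          ((r / 2) ^ m * ((r / 2) ^ K) ^ (d - 1)) := by
        rw [div_eq_mul_one_div _ (3 : ℝ), mul_pow]; ring
    _ ≤ (∑ j ∈ Finset.range (brunelLength r m), ((j : ℝ) + 1) ^ d) * ((1 - r) / 2) ^ d *
          ∏ i, (r / 2) ^ (x i).size := by
        gcongr ?_ * _ * ?_
        · refine le_trans ?_ (pow_div_le_sum_succ_pow d _)
          gcongr
          exact inv_pow_div_three_le_brunelLength r m
        · exact mul_pow_card_sub_one_le_prod_pow (by positivity) (by linarith) hsize i₀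
    _ ≤ ∑ j ∈ Finset.range (brunelLength r m), ∏ i, (brunelPoly r M ^ (j + 1)).coeff (x i) := by
        rw [Finset.sum_mul, Finset.sum_mul]
        exact Finset.sum_le_sum fun j hj => le_prod_coeff_brunelPoly_pow h0 h1.le
          (fun i => (hsize i).trans_lt hKM) hi₀ (Finset.mem_range.1 hj)
    _ ≤ _ := Finset.sum_le_sum_of_subset_of_nonneg
        (Finset.range_mono (brunelLength_mono hr0 h1.le (hsize i₀))) fun j _ _ => hcoeff j

end MultiIndex

end

end BrunelDistribution

section MvPolynomials

open Polynomial

variable {ι R : Type*} [Fintype ι] [CommSemiring R]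

/-- The product `∏ i, p i (X i)` of polynomials in separate variables. With `p i` the generating
polynomials of probability distributions on `ℕ`, it is that of their product on `ι → ℕ`. -/
noncomputable def tensorPoly (p : ι → R[X]) : MvPolynomial ι R :=
  ∏ i, aeval (MvPolynomial.X i) (p i)

theorem coeff_tensorPoly (p : ι → R[X]) (x : ι →₀ ℕ) :
    (tensorPoly p).coeff x = ∏ i, (p i).coeff (x i) := by
  classical
  have hexpand : tensorPoly p = ∑ y ∈ Fintype.piFinset fun i => Finset.range ((p i).natDegree + 1),
      MvPolynomial.C (∏ i, (p i).coeff (y i)) * ∏ i, MvPolynomial.X i ^ y i := by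
    simp only [tensorPoly, aeval_eq_sum_range, Finset.prod_univ_sum, MvPolynomial.smul_eq_C_mul,
      Finset.prod_mul_distrib, map_prod]
  have hexponent (y : ι → ℕ) : x = Finsupp.indicator Finset.univ (fun i _ => y i) ↔ ⇑x = y := by
    simp [Finsupp.ext_iff, funext_iff]
  simp only [hexpand, MvPolynomial.coeff_sum, MvPolynomial.coeff_C_mul,
    MvPolynomial.coeff_prod_X_pow, hexponent, mul_ite, mul_one, mul_zero, Finset.sum_ite_eq]
  split_ifs with hx
  · rfl
  · obtain ⟨i, hi⟩ : ∃ i, (p i).natDegree < x i := by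
      simpa [Fintype.mem_piFinset, Nat.lt_succ_iff] using hx
    exact (Finset.prod_eq_zero (Finset.mem_univ i) (coeff_eq_zero_of_natDegree_lt hi)).symm

theorem tensorPoly_pow (p : ι → R[X]) (j : ℕ) :
    tensorPoly p ^ j = tensorPoly fun i => p i ^ j := by
  simp only [tensorPoly, map_pow, Finset.prod_pow]

theorem eval_one_tensorPoly (p : ι → R[X]) :
    MvPolynomial.eval 1 (tensorPoly p) = ∏ i, (p i).eval 1 := by
  simp [tensorPoly, map_prod, ← MvPolynomial.coe_aeval_eq_eval, ← aeval_algHom_apply,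
    coe_aeval_eq_eval]

theorem tensorPoly_eq_aeval_mul_tensorPoly_update [DecidableEq ι] (p : ι → R[X]) (i : ι) :
    tensorPoly p = aeval (MvPolynomial.X i) (p i) * tensorPoly (Function.update p i 1) := by
  simp only [tensorPoly]
  rw [← Finset.mul_prod_erase _ _ (Finset.mem_univ i),
    ← Finset.mul_prod_erase Finset.univ (fun j => aeval _ (Function.update p i 1 j))
      (Finset.mem_univ i), Function.update_self, map_one, one_mul]
  congr 1
  refine Finset.prod_congr rfl fun j hj => ?_
  rw [Function.update_of_ne (Finset.ne_of_mem_erase hj)]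

theorem coeff_tensorPoly_nonneg {p : ι → ℝ[X]} (hp : ∀ i, p i ∈ nonnegCoeff) (x : ι →₀ ℕ) :
    0 ≤ (tensorPoly p).coeff x := by
  rw [coeff_tensorPoly]
  exact Finset.prod_nonneg fun i _ => hp i _

theorem eval_one_tensorPoly_le_one {p : ι → ℝ[X]} (hp : ∀ i, p i ∈ nonnegCoeff)
    (hp1 : ∀ i, (p i).eval 1 ≤ 1) : MvPolynomial.eval 1 (tensorPoly p) ≤ 1 := by
  rw [eval_one_tensorPoly]
  refine Finset.prod_le_one (fun i _ => ?_) fun i _ => hp1 i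
  rw [eval_one_eq_sum_coeff (Nat.lt_succ_self _)]
  exact Finset.sum_nonneg fun s _ => hp i s

/-- The average `∏ i, (1 + X i + ⋯ + X i ^ (n i - 1)) / n i`. -/
noncomputable def cesaroMvPoly (n : ι → ℕ) : MvPolynomial ι ℝ :=
  tensorPoly fun i => cesaroPoly (n i)

theorem coeff_cesaroMvPoly (n : ι → ℕ) (x : ι →₀ ℕ) :
    (cesaroMvPoly n).coeff x = ∏ i, if x i < n i then (n i : ℝ)⁻¹ else 0 := by
  simp only [cesaroMvPoly, coeff_tensorPoly, coeff_cesaroPoly]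

theorem coeff_cesaroMvPoly_nonneg (n : ι → ℕ) (x : ι →₀ ℕ) : 0 ≤ (cesaroMvPoly n).coeff x :=
  coeff_tensorPoly_nonneg (fun i => cesaroPoly_mem_nonnegCoeff (n i)) x

theorem eval_one_cesaroMvPoly_le_one (n : ι → ℕ) : MvPolynomial.eval 1 (cesaroMvPoly n) ≤ 1 :=
  eval_one_tensorPoly_le_one (fun i => cesaroPoly_mem_nonnegCoeff (n i))
    fun i => eval_one_cesaroPoly_le_one (n i)

theorem cesaroMvPoly_eq_zero {n : ι → ℕ} {i : ι} (hi : n i = 0) : cesaroMvPoly n = 0 :=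
  Finset.prod_eq_zero (Finset.mem_univ i) (by simp [hi, cesaroPoly])

theorem coeff_aeval_cesaroPoly (p : ι → ℝ[X]) (N : ℕ) (x : ι →₀ ℕ) :
    (aeval (tensorPoly p) (cesaroPoly N)).coeff x
      = (N : ℝ)⁻¹ * ∑ j ∈ Finset.range N, ∏ i, (p i ^ j).coeff (x i) := by
  simp [cesaroPoly, tensorPoly_pow, coeff_tensorPoly, MvPolynomial.coeff_sum,
    MvPolynomial.algebraMap_eq, MvPolynomial.coeff_C_mul]

theorem exists_brunel_ratio (d : ℕ) : ∃ r : ℝ, 3 / 4 ≤ r ∧ r < 1 ∧ 1 / 2 ≤ r ^ d := by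
  have hd : 1 / (4 * ((d : ℝ) + 1)) ≤ 1 / 4 :=
    one_div_le_one_div_of_le (by norm_num) (by linarith [d.cast_nonneg (α := ℝ)])
  refine ⟨1 + -(1 / (4 * (d + 1))), by linarith, ?_, le_trans ?_ (one_add_mul_le_pow ?_ d)⟩
  · linarith [show (0 : ℝ) < 1 / (4 * (d + 1)) by positivity]
  · have : (d : ℝ) * (1 / (4 * (d + 1))) ≤ 1 / 4 := by
      rw [mul_one_div, div_le_iff₀ (by positivity)]; linarith
    linarith
  · linarith

/-- Brunel's domination: up to a factor independent of the cubes, the averages over all dyadic cubes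
of side less than `2 ^ M` are dominated by the Cesàro averages of a single operator. -/
theorem exists_coeff_cesaroMvPoly_two_pow_le (ι : Type*) [Fintype ι] :
    ∃ C > (0 : ℝ), ∀ M : ℕ, ∃ P : MvPolynomial ι ℝ,
      (∀ x, 0 ≤ P.coeff x) ∧ MvPolynomial.eval 1 P ≤ 1 ∧
      ∀ K < M, ∃ N ≠ 0, ∀ x, (cesaroMvPoly fun _ : ι => 2 ^ K).coeff x
        ≤ C * (aeval P (cesaroPoly N)).coeff x := by
  cases isEmpty_or_nonempty ι
  · refine ⟨1, one_pos, fun M => ⟨1, fun x => ?_, by simp, fun K _ => ⟨1, one_ne_zero, ?_⟩⟩⟩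
    · rw [MvPolynomial.coeff_one]; split_ifs <;> norm_num
    · simp [cesaroMvPoly, tensorPoly, cesaroPoly]
  obtain ⟨r, h0, h1, hrd⟩ := exists_brunel_ratio (Fintype.card ι)
  obtain ⟨c, hc, hlower⟩ := exists_le_sum_prod_coeff_brunelPoly_pow h0 h1 hrd
  have hr0 : 0 < r := by linarith
  have hv := brunelPoly_mem_nonnegCoeff hr0.le h1.le
  refine ⟨3 / c, by positivity, fun M => ⟨tensorPoly fun _ => brunelPoly r M,
    coeff_tensorPoly_nonneg fun _ => hv M, eval_one_tensorPoly_le_one (fun _ => hv M) fun _ => ?_,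
    fun K hK => ⟨brunelLength r K + 1, Nat.succ_ne_zero _, fun x => ?_⟩⟩⟩
  · rw [eval_one_brunelPoly]
    exact sub_le_self _ (by positivity)
  have hpos : ∀ j, 0 ≤ ∏ i, (brunelPoly r M ^ j).coeff (x i) := fun j =>
    Finset.prod_nonneg fun i _ => pow_mem (hv M) j _
  rw [coeff_aeval_cesaroPoly]
  by_cases hx : ∀ i, x i < 2 ^ K
  · have hlength := brunelLength_succ_le hr0 h1.le K
    calc (cesaroMvPoly fun _ : ι => 2 ^ K).coeff x
        = 3 / c * ((3 * (r ^ K)⁻¹)⁻¹ * (c * (r ^ K)⁻¹ * ((2 ^ K) ^ Fintype.card ι)⁻¹)) := by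
          rw [coeff_cesaroMvPoly, Finset.prod_congr rfl fun i _ => if_pos (hx i)]
          simp only [Finset.prod_const, Finset.card_univ, inv_pow]
          push_cast
          field_simp
      _ ≤ 3 / c * (((brunelLength r K + 1 : ℕ) : ℝ)⁻¹ * ∑ j ∈ Finset.range (brunelLength r K),
            ∏ i, (brunelPoly r M ^ (j + 1)).coeff (x i)) := by
          gcongr
          exact hlower hK _ hx
      _ ≤ _ := by
          gcongr
          rw [Finset.sum_range_succ']
          exact le_add_of_nonneg_right (hpos 0)
  · obtain ⟨i, hi⟩ := not_forall.1 hx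
    rw [coeff_cesaroMvPoly, Finset.prod_eq_zero (Finset.mem_univ i) (if_neg hi)]
    have := Finset.sum_nonneg fun j (_ : j ∈ Finset.range (brunelLength r K + 1)) => hpos j
    positivity

theorem coeff_cesaroMvPoly_le {n m : ι → ℕ} {c : ℝ} (hc : 0 ≤ c) (hnm : ∀ i, n i ≤ m i)
    (hmn : ∀ i, (m i : ℝ) ≤ c * n i) (x : ι →₀ ℕ) :
    (cesaroMvPoly n).coeff x ≤ c ^ Fintype.card ι * (cesaroMvPoly m).coeff x := by
  rw [coeff_cesaroMvPoly, coeff_cesaroMvPoly, ← Finset.card_univ, ← Finset.prod_const,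
    ← Finset.prod_mul_distrib]
  refine Finset.prod_le_prod (fun i _ => by split_ifs <;> positivity) fun i _ => ?_
  by_cases hx : x i < n i
  · have hn : (0 : ℝ) < n i := mod_cast (Nat.zero_le _).trans_lt hx
    have hm : (0 : ℝ) < m i := hn.trans_le (mod_cast hnm i)
    rw [if_pos hx, if_pos (hx.trans_le (hnm i)), ← div_eq_mul_inv, le_div_iff₀ hm,
      inv_mul_le_iff₀ hn, mul_comm]
    exact hmn i
  · rw [if_neg hx]
    split_ifs <;> positivity

theorem exists_two_pow_between {ι : Type*} [Finite ι] {n : ι → ℕ} {c : ℝ} (hn : ∀ i, n i ≠ 0)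
    (hsector : ∀ i j, (n i : ℝ) ≤ c * n j) :
    ∃ K, ∀ i, n i ≤ 2 ^ K ∧ ((2 ^ K : ℕ) : ℝ) ≤ 2 * c * n i := by
  cases isEmpty_or_nonempty ι
  · exact ⟨0, fun i => isEmptyElim i⟩
  obtain ⟨i₀, hi₀⟩ := Finite.exists_max n
  refine ⟨Nat.log 2 (n i₀) + 1,
    fun i => ⟨(hi₀ i).trans (Nat.lt_pow_succ_log_self one_lt_two _).le, ?_⟩⟩
  have hlog : ((2 ^ Nat.log 2 (n i₀) : ℕ) : ℝ) ≤ n i₀ := mod_cast Nat.pow_log_le_self 2 (hn i₀)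
  have := hsector i₀ i
  push_cast at hlog ⊢
  rw [pow_succ]
  linarith

theorem exists_coeff_cesaroMvPoly_le_two_pow (ι : Type*) [Fintype ι] (c : ℝ) :
    ∃ C ≥ (0 : ℝ), ∀ n : ι → ℕ, (∀ i j, n j ≠ 0 → (n i : ℝ) ≤ c * n j) →
      ∃ K, ∀ x, (cesaroMvPoly n).coeff x ≤ C * (cesaroMvPoly fun _ : ι => 2 ^ K).coeff x := by
  refine ⟨(2 * |c|) ^ Fintype.card ι, by positivity, fun n hsector => ?_⟩
  by_cases hn : ∀ i, n i ≠ 0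
  · obtain ⟨K, hK⟩ := exists_two_pow_between hn fun i j => (hsector i j (hn j)).trans
      (mul_le_mul_of_nonneg_right (le_abs_self c) (n j).cast_nonneg)
    exact ⟨K, coeff_cesaroMvPoly_le (by positivity) (fun i => (hK i).1) fun i => (hK i).2⟩
  · obtain ⟨i, hi⟩ := not_forall_not.1 hn
    refine ⟨0, fun x => ?_⟩
    rw [cesaroMvPoly_eq_zero hi, MvPolynomial.coeff_zero]
    exact mul_nonneg (by positivity) (coeff_cesaroMvPoly_nonneg _ x)

/-- Brunel's domination for the averages over boxes of bounded eccentricity. -/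
theorem exists_coeff_cesaroMvPoly_le (ι : Type*) [Fintype ι] (c : ℝ) :
    ∃ C ≥ (0 : ℝ), ∀ (n : ℕ → ι → ℕ), (∀ k i j, n k j ≠ 0 → (n k i : ℝ) ≤ c * n k j) →
      ∀ k₀ : ℕ, ∃ P : MvPolynomial ι ℝ, (∀ x, 0 ≤ P.coeff x) ∧ MvPolynomial.eval 1 P ≤ 1 ∧
        ∀ k < k₀, ∃ N ≠ 0, ∀ x,
          (cesaroMvPoly (n k)).coeff x ≤ C * (aeval P (cesaroPoly N)).coeff x := by
  obtain ⟨C₁, hC₁, hbox⟩ := exists_coeff_cesaroMvPoly_le_two_pow ι c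
  obtain ⟨C₂, hC₂, hcube⟩ := exists_coeff_cesaroMvPoly_two_pow_le ι
  refine ⟨C₁ * C₂, by positivity, fun n hsector k₀ => ?_⟩
  choose K hK using fun k => hbox (n k) (hsector k)
  obtain ⟨P, hP, hP1, hdom⟩ := hcube ((Finset.range k₀).sup K + 1)
  refine ⟨P, hP, hP1, fun k hk => ?_⟩
  obtain ⟨N, hN, hx⟩ := hdom (K k) (Nat.lt_succ_of_le (Finset.le_sup (Finset.mem_range.2 hk)))
  refine ⟨N, hN, fun x => (hK k x).trans ?_⟩
  rw [mul_assoc]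
  exact mul_le_mul_of_nonneg_left (hx x) hC₁

end MvPolynomials

section FunctionSpace

variable {μ : Measure Ω} {p : ℝ≥0∞} {E : Type*} [NormedAddCommGroup E]

theorem eLpNorm_aeeqFun_add_ne_top (hp : 1 ≤ p) {f g : Ω →ₘ[μ] E} (hf : eLpNorm f p μ ≠ ∞)
    (hg : eLpNorm g p μ ≠ ∞) : eLpNorm (f + g : Ω →ₘ[μ] E) p μ ≠ ∞ := by
  rw [eLpNorm_congr_ae (AEEqFun.coeFn_add f g)]
  exact ((eLpNorm_add_le f.aestronglyMeasurable g.aestronglyMeasurable hp).trans_lt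
    (add_lt_top.2 ⟨hf.lt_top, hg.lt_top⟩)).ne

theorem eLpNorm_aeeqFun_smul {𝕜 : Type*} [NormedField 𝕜] [NormedSpace 𝕜 E] (c : 𝕜) (f : Ω →ₘ[μ] E) :
    eLpNorm (c • f : Ω →ₘ[μ] E) p μ = ‖c‖ₑ * eLpNorm f p μ := by
  rw [eLpNorm_congr_ae (AEEqFun.coeFn_smul c f), eLpNorm_const_smul]

theorem eLpNorm_aeeqFun_zero : eLpNorm (0 : Ω →ₘ[μ] E) p μ = 0 := by
  rw [eLpNorm_congr_ae AEEqFun.coeFn_zero, eLpNorm_zero]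

variable (μ) in
/-- The space `L¹(μ) + L^∞(μ)` on which Dunford–Schwartz operators act. -/
def L1AddLinf : Submodule ℝ (Ω →ₘ[μ] ℝ) where
  carrier := {f | MemL1pLinf μ f}
  add_mem' := by
    rintro _ _ ⟨g, h, hg, hh, rfl⟩ ⟨g', h', hg', hh', rfl⟩
    exact ⟨g + g', h + h', eLpNorm_aeeqFun_add_ne_top le_rfl hg hg',
      eLpNorm_aeeqFun_add_ne_top le_top hh hh', add_add_add_comm ..⟩
  zero_mem' := ⟨0, 0, by simp [eLpNorm_aeeqFun_zero],
    by rw [eLpNorm_aeeqFun_zero]; exact zero_ne_top, (add_zero 0).symm⟩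
  smul_mem' := by
    rintro c _ ⟨g, h, hg, hh, rfl⟩
    refine ⟨c • g, c • h, ?_, ?_, smul_add ..⟩ <;> rw [eLpNorm_aeeqFun_smul]
    exacts [mul_ne_top enorm_ne_top hg, mul_ne_top enorm_ne_top hh]

namespace L1AddLinf

noncomputable instance : CoeFun (L1AddLinf μ) fun _ => Ω → ℝ := ⟨fun f => ⇑(f : Ω →ₘ[μ] ℝ)⟩

theorem ext {f g : L1AddLinf μ} (h : f =ᵐ[μ] g) : f = g := Subtype.ext (AEEqFun.ext h)

theorem coeFn_add (f g : L1AddLinf μ) : ⇑(f + g) =ᵐ[μ] f + g := AEEqFun.coeFn_add _ _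

theorem coeFn_sub (f g : L1AddLinf μ) : ⇑(f - g) =ᵐ[μ] f - g := AEEqFun.coeFn_sub _ _

theorem coeFn_smul (c : ℝ) (f : L1AddLinf μ) : ⇑(c • f) =ᵐ[μ] c • ⇑f := AEEqFun.coeFn_smul _ _

theorem coeFn_le {f g : L1AddLinf μ} : f ≤ᵐ[μ] g ↔ f ≤ g := AEEqFun.coeFn_le

instance : IsOrderedAddMonoid (L1AddLinf μ) where
  add_le_add_left f g hfg h := by
    rw [← coeFn_le] at hfg ⊢
    filter_upwards [hfg, coeFn_add f h, coeFn_add g h] with x hx hf hg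
    simpa only [hf, hg, Pi.add_apply, add_le_add_iff_right] using hx

instance : PosSMulMono ℝ (L1AddLinf μ) where
  smul_le_smul_of_nonneg_left c hc f g hfg := by
    rw [← coeFn_le] at hfg ⊢
    filter_upwards [hfg, coeFn_smul c f, coeFn_smul c g] with x hx hf hg
    simpa only [hf, hg, Pi.smul_apply] using smul_le_smul_of_nonneg_left hx hc

theorem eLpNorm_add_le (hp : 1 ≤ p) (f g : L1AddLinf μ) :
    eLpNorm (f + g : L1AddLinf μ) p μ ≤ eLpNorm f p μ + eLpNorm g p μ := by
  rw [eLpNorm_congr_ae (coeFn_add f g)]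
  exact MeasureTheory.eLpNorm_add_le f.1.aestronglyMeasurable g.1.aestronglyMeasurable hp

theorem eLpNorm_sub_le (hp : 1 ≤ p) (f g : L1AddLinf μ) :
    eLpNorm (f - g : L1AddLinf μ) p μ ≤ eLpNorm f p μ + eLpNorm g p μ := by
  rw [eLpNorm_congr_ae (coeFn_sub f g)]
  exact MeasureTheory.eLpNorm_sub_le f.1.aestronglyMeasurable g.1.aestronglyMeasurable hp

theorem eLpNorm_smul (c : ℝ) (f : L1AddLinf μ) :
    eLpNorm (c • f : L1AddLinf μ) p μ = ‖c‖ₑ * eLpNorm f p μ := by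
  rw [eLpNorm_congr_ae (coeFn_smul c f), eLpNorm_const_smul]

theorem eLpNorm_sum_smul_le (hp : 1 ≤ p) {ι : Type*} (s : Finset ι) (c : ι → ℝ)
    (f : ι → L1AddLinf μ) {B : ℝ≥0∞} (hf : ∀ i ∈ s, eLpNorm (f i) p μ ≤ B) :
    eLpNorm (∑ i ∈ s, c i • f i : L1AddLinf μ) p μ ≤ (∑ i ∈ s, ‖c i‖ₑ) * B := by
  refine (Finset.le_sum_of_subadditive (fun f : L1AddLinf μ => eLpNorm f p μ)
    eLpNorm_aeeqFun_zero.le (eLpNorm_add_le hp) s _).trans ?_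
  rw [Finset.sum_mul]
  refine Finset.sum_le_sum fun i hi => ?_
  rw [eLpNorm_smul]
  gcongr
  exact hf i hi

end L1AddLinf

theorem rpow_sub_one_mul_eLpNorm_one_indicator_le (hp1 : 1 ≤ p) (hp : p ≠ ∞)
    {f : Ω → E} {s : Set Ω} {a : ℝ≥0∞} (ha : a ≠ ∞) (hs : ∀ x ∈ s, a ≤ ‖f x‖ₑ) :
    a ^ (p.toReal - 1) * eLpNorm (s.indicator f) 1 μ ≤ eLpNorm f p μ ^ p.toReal := by
  have hq : 1 ≤ p.toReal := by simpa using ENNReal.toReal_mono hp hp1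
  rw [eLpNorm_one_eq_lintegral_enorm,
    eLpNorm_eq_lintegral_rpow_enorm_toReal (one_pos.trans_le hp1).ne' hp, ← ENNReal.rpow_mul,
    one_div_mul_cancel (by positivity), ENNReal.rpow_one,
    ← lintegral_const_mul' _ _ (ENNReal.rpow_lt_top_of_nonneg (by linarith) ha).ne]
  refine lintegral_mono fun x => ?_
  by_cases hx : x ∈ s
  · calc a ^ (p.toReal - 1) * ‖s.indicator f x‖ₑ
        ≤ ‖f x‖ₑ ^ (p.toReal - 1) * ‖f x‖ₑ ^ (1 : ℝ) := by
          rw [ENNReal.rpow_one, indicator_of_mem hx]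
          gcongr
          exact hs x hx
      _ = ‖f x‖ₑ ^ p.toReal := by
          rw [← ENNReal.rpow_add_of_nonneg _ _ (by linarith) zero_le_one, sub_add_cancel]
  · simp [indicator_of_notMem hx]

theorem exists_truncation [Fact (1 ≤ p)] (hp : p ≠ ∞) (f : Lp ℝ p μ) {r : ℝ} (hr : 0 < r) :
    ∃ (g : Lp ℝ 1 μ) (h : Lp ℝ ∞ μ), (f : Ω →ₘ[μ] ℝ) = g + h ∧ (∀ᵐ x ∂μ, |h x| ≤ r) ∧
      ENNReal.ofReal r ^ (p.toReal - 1) * ‖g‖ₑ ≤ ‖f‖ₑ ^ p.toReal := by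
  set A : Set Ω := {x | r < |f x|}
  have hA : MeasurableSet A :=
    measurableSet_lt measurable_const (Lp.stronglyMeasurable f).measurable.abs
  have hg_meas : AEStronglyMeasurable (A.indicator f) μ := (Lp.aestronglyMeasurable f).indicator hA
  have hh_meas : AEStronglyMeasurable (Aᶜ.indicator f) μ :=
    (Lp.aestronglyMeasurable f).indicator hA.compl
  have hh_bound (x : Ω) : |Aᶜ.indicator f x| ≤ r := by
    by_cases hx : x ∈ A
    · simpa [hx] using hr.le
    · simpa [hx] using not_lt.1 hx
  have hg_norm : ENNReal.ofReal r ^ (p.toReal - 1) * eLpNorm (A.indicator f) 1 μ ≤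
      ‖f‖ₑ ^ p.toReal := by
    rw [Lp.enorm_def]
    refine rpow_sub_one_mul_eLpNorm_one_indicator_le Fact.out hp ENNReal.ofReal_ne_top
      fun x hx => ?_
    rw [← ofReal_norm]
    exact ENNReal.ofReal_le_ofReal (le_of_lt hx)
  have hg : MemLp (A.indicator f) 1 μ := by
    refine ⟨hg_meas, lt_top_of_mul_ne_top_right
      (hg_norm.trans_lt (ENNReal.rpow_lt_top_of_nonneg toReal_nonneg enorm_ne_top)).ne ?_⟩
    exact (ENNReal.rpow_pos (ENNReal.ofReal_pos.2 hr) ENNReal.ofReal_ne_top).ne'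
  have hh : MemLp (Aᶜ.indicator f) ∞ μ := memLp_top_of_bound hh_meas r (ae_of_all _ hh_bound)
  refine ⟨hg.toLp _, hh.toLp _, AEEqFun.ext ?_, ?_, ?_⟩
  · filter_upwards [AEEqFun.coeFn_add (hg.toLp _).1 (hh.toLp _).1, hg.coeFn_toLp, hh.coeFn_toLp]
      with x hsum hgx hhx
    rw [hsum, Pi.add_apply, hgx, hhx, indicator_self_add_compl_apply]
  · filter_upwards [hh.coeFn_toLp] with x hx
    exact hx ▸ hh_bound x
  · rwa [Lp.enorm_def, eLpNorm_congr_ae hg.coeFn_toLp]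

theorem memL1pLinf_of_eLpNorm_ne_top (hp : 1 ≤ p) {f : Ω →ₘ[μ] ℝ} (hf : eLpNorm f p μ ≠ ∞) :
    MemL1pLinf μ f := by
  rcases eq_or_ne p ∞ with rfl | hp_top
  · exact ⟨0, f, by rw [eLpNorm_aeeqFun_zero]; exact zero_ne_top, hf, (zero_add f).symm⟩
  · have : Fact (1 ≤ p) := ⟨hp⟩
    obtain ⟨g, h, hfgh, -⟩ :=
      exists_truncation hp_top ⟨f, Lp.mem_Lp_iff_eLpNorm_lt_top.2 hf.lt_top⟩ one_pos
    exact ⟨g, h, Lp.eLpNorm_ne_top g, Lp.eLpNorm_ne_top h, hfgh⟩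

namespace L1AddLinf

/-- The inclusion of `L^p(μ)` into `L¹(μ) + L^∞(μ)`. -/
def ofLp [Fact (1 ≤ p)] : Lp ℝ p μ →ₗ[ℝ] L1AddLinf μ where
  toFun f := ⟨f, memL1pLinf_of_eLpNorm_ne_top Fact.out (Lp.eLpNorm_ne_top f)⟩
  map_add' _ _ := rfl
  map_smul' _ _ := rfl

theorem coeFn_ofLp [Fact (1 ≤ p)] (f : Lp ℝ p μ) : ⇑(ofLp f) = f := rfl

theorem coeFn_ofLp_toLp [Fact (1 ≤ p)] {f : Ω → ℝ} (hf : MemLp f p μ) :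
    ofLp (hf.toLp f) =ᵐ[μ] f :=
  hf.coeFn_toLp

theorem coeFn_ofLp_indicatorConstLp [Fact (1 ≤ p)] {s : Set Ω} (hs : MeasurableSet s)
    (hμs : μ s ≠ ∞) (c : ℝ) : ofLp (indicatorConstLp p hs hμs c) =ᵐ[μ] s.indicator fun _ => c :=
  indicatorConstLp_coeFn (p := p) (hs := hs) (hμs := hμs) (c := c)

end L1AddLinf

end FunctionSpace

section DunfordSchwartz

open L1AddLinf

variable {μ : Measure Ω} {p : ℝ≥0∞}

/-- Positive Dunford–Schwartz operators, as linear endomorphisms of `L¹(μ) + L^∞(μ)`. -/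
structure IsDunfordSchwartz (S : Module.End ℝ (L1AddLinf μ)) : Prop where
  map_nonneg : ∀ f, 0 ≤ f → 0 ≤ S f
  eLpNorm_one_le : ∀ f, eLpNorm (S f) 1 μ ≤ eLpNorm f 1 μ
  eLpNorm_top_le : ∀ f, eLpNorm (S f) ∞ μ ≤ eLpNorm f ∞ μ

variable (μ) in
/-- The monoid of positive Dunford–Schwartz operators under composition. -/
def dunfordSchwartzSubmonoid : Submonoid (Module.End ℝ (L1AddLinf μ)) where
  carrier := {S | IsDunfordSchwartz S}
  one_mem' := ⟨fun _ => id, fun _ => le_rfl, fun _ => le_rfl⟩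
  mul_mem' hS hR := ⟨fun f hf => hS.map_nonneg _ (hR.map_nonneg f hf),
    fun f => (hS.eLpNorm_one_le _).trans (hR.eLpNorm_one_le f),
    fun f => (hS.eLpNorm_top_le _).trans (hR.eLpNorm_top_le f)⟩

theorem eLpNorm_top_le_iff {f : L1AddLinf μ} {c : ℝ} (hc : 0 ≤ c) :
    eLpNorm f ∞ μ ≤ ENNReal.ofReal c ↔ ∀ᵐ x ∂μ, |f x| ≤ c := by
  rw [eLpNorm_exponent_top]
  refine ⟨fun h => ?_, fun h => eLpNormEssSup_le_of_ae_bound h⟩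
  filter_upwards [ae_le_eLpNormEssSup (f := f) (μ := μ)] with x hx
  rw [← Real.norm_eq_abs, ← ENNReal.ofReal_le_ofReal_iff hc, ofReal_norm]
  exact hx.trans h

theorem convexOn_norm_rpow {q : ℝ} (hq : 1 ≤ q) : ConvexOn ℝ univ fun y : ℝ => ‖y‖ ^ q :=
  ConvexOn.comp (g := fun y : ℝ => y ^ q)
    (by simpa only [image_univ, range_norm] using convexOn_rpow hq) convexOn_univ_norm
    (by simpa only [image_univ, range_norm] using
      Real.monotoneOn_rpow_Ici_of_exponent_nonneg (zero_le_one.trans hq))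

theorem exists_forall_affine_le_iff {ψ : ℝ → ℝ} (hψ : ConvexOn ℝ univ ψ) :
    ∃ a c : ℕ → ℝ, ∀ y b, ψ y ≤ b ↔ ∀ i, a i * y + c i ≤ b := by
  obtain ⟨l, c, hle, hsup⟩ := hψ.real_univ_sSup_of_nat_affine_eq
    (continuousOn_univ.1 (hψ.continuousOn isOpen_univ)).lowerSemicontinuous
  have hl (i : ℕ) (y : ℝ) : (⇑(l i) + Function.const ℝ (c i)) y = l i 1 * y + c i := by
    simpa [mul_comm] using (l i).map_smul y 1
  refine ⟨fun i => l i 1, c, fun y b => ⟨fun h i => (hl i y).symm.trans_le ((hle i y).trans h),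
    fun h => ?_⟩⟩
  rw [← hsup, iSup_apply]
  exact ciSup_le fun i => (hl i y).trans_le (h i)

namespace IsDunfordSchwartz

variable {S : Module.End ℝ (L1AddLinf μ)}

theorem sum_smul {ι : Type*} {s : Finset ι} {c : ι → ℝ} {S : ι → Module.End ℝ (L1AddLinf μ)}
    (hc : ∀ i ∈ s, 0 ≤ c i) (hc1 : ∑ i ∈ s, c i ≤ 1) (hS : ∀ i ∈ s, IsDunfordSchwartz (S i)) :
    IsDunfordSchwartz (∑ i ∈ s, c i • S i) := by
  have happly (f : L1AddLinf μ) : (∑ i ∈ s, c i • S i) f = ∑ i ∈ s, c i • S i f := by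
    simp only [LinearMap.sum_apply, LinearMap.smul_apply]
  have hc1' : ∑ i ∈ s, ‖c i‖ₑ ≤ 1 := by
    rw [Finset.sum_congr rfl fun i hi => Real.enorm_of_nonneg (hc i hi),
      ← ENNReal.ofReal_sum_of_nonneg hc]
    exact ENNReal.ofReal_le_one.2 hc1
  refine ⟨fun f hf => ?_, fun f => ?_, fun f => ?_⟩ <;> rw [happly]
  · exact Finset.sum_nonneg fun i hi => smul_nonneg (hc i hi) ((hS i hi).map_nonneg f hf)
  · exact (eLpNorm_sum_smul_le le_rfl s c _ fun i hi => (hS i hi).eLpNorm_one_le f).trans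
      (mul_le_of_le_one_left' hc1')
  · exact (eLpNorm_sum_smul_le le_top s c _ fun i hi => (hS i hi).eLpNorm_top_le f).trans
      (mul_le_of_le_one_left' hc1')

theorem mono (hS : IsDunfordSchwartz S) {f g : L1AddLinf μ} (hfg : f ≤ g) : S f ≤ S g := by
  simpa only [map_sub, sub_nonneg] using hS.map_nonneg _ (sub_nonneg.2 hfg)

theorem abs_le_of_abs_le (hS : IsDunfordSchwartz S) {f : L1AddLinf μ} {c : ℝ} (hc : 0 ≤ c)
    (hf : ∀ᵐ x ∂μ, |f x| ≤ c) : ∀ᵐ x ∂μ, |S f x| ≤ c := by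
  rw [← eLpNorm_top_le_iff hc] at hf ⊢
  exact (hS.eLpNorm_top_le f).trans hf

/- Jensen's inequality: `ψ` is a countable supremum of affine maps `y ↦ a * y + c`, here with
`c ≤ 0`, and `S` is subunital, so `a * S f + c ≤ S (a * f + c)` for each of them. -/
theorem convexOn_comp_le (hS : IsDunfordSchwartz S) {ψ : ℝ → ℝ} (hψ : ConvexOn ℝ univ ψ)
    (hψ0 : ψ 0 ≤ 0) {f g : L1AddLinf μ} (hfg : ∀ᵐ x ∂μ, ψ (f x) ≤ g x) :
    ∀ᵐ x ∂μ, ψ (S f x) ≤ S g x := by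
  obtain ⟨a, c, hψ_le_iff⟩ := exists_forall_affine_le_iff hψ
  have hc (i : ℕ) : c i ≤ 0 := by simpa using (hψ_le_iff 0 0).1 hψ0 i
  obtain ⟨u, hu⟩ : ∃ u : L1AddLinf μ, u =ᵐ[μ] fun _ => 1 := ⟨_, coeFn_ofLp_toLp (memLp_top_const 1)⟩
  have hSu : ∀ᵐ x ∂μ, |S u x| ≤ 1 :=
    hS.abs_le_of_abs_le zero_le_one (hu.mono fun x hx => by simp [hx])
  have hcoeFn (i : ℕ) (f u : L1AddLinf μ) :
      ∀ᵐ x ∂μ, (a i • f + c i • u : L1AddLinf μ) x = a i * f x + c i * u x := by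
    filter_upwards [coeFn_add (a i • f) (c i • u), coeFn_smul (a i) f, coeFn_smul (c i) u]
      with x hadd hf hu
    rw [hadd, Pi.add_apply, hf, hu]
    rfl
  have haffine (i : ℕ) : ∀ᵐ x ∂μ, a i * S f x + c i ≤ S g x := by
    have hSle : S (a i • f + c i • u) ≤ S g := by
      refine hS.mono (coeFn_le.1 ?_)
      filter_upwards [hfg, hu, hcoeFn i f u] with x hx hux hfu
      simpa only [hfu, hux, mul_one] using (hψ_le_iff _ _).1 hx i
    rw [map_add, map_smul, map_smul, ← coeFn_le] at hSle
    filter_upwards [hSle, hSu, hcoeFn i (S f) (S u)] with x hx hux hfu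
    nlinarith [hc i, (abs_le.1 hux).2]
  filter_upwards [ae_all_iff.2 haffine] with x hx
  exact (hψ_le_iff _ _).2 hx

theorem abs_le (hS : IsDunfordSchwartz S) {f g : L1AddLinf μ} (hfg : ∀ᵐ x ∂μ, |f x| ≤ g x) :
    ∀ᵐ x ∂μ, |S f x| ≤ S g x :=
  hS.convexOn_comp_le convexOn_univ_norm norm_zero.le hfg

theorem eLpNorm_le (hS : IsDunfordSchwartz S) (hp : 1 ≤ p) (f : L1AddLinf μ) :
    eLpNorm (S f) p μ ≤ eLpNorm f p μ := by
  rcases eq_or_ne p ∞ with rfl | hp_top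
  · exact hS.eLpNorm_top_le f
  rcases eq_or_ne (eLpNorm f p μ) ∞ with hf | hf
  · exact hf ▸ le_top
  have hp0 : p ≠ 0 := (one_pos.trans_le hp).ne'
  have hq : 1 ≤ p.toReal := by simpa using ENNReal.toReal_mono hp_top hp
  have hmem : MemLp (fun x => ‖f x‖ ^ p.toReal) 1 μ :=
    MemLp.norm_rpow ⟨f.1.aestronglyMeasurable, hf.lt_top⟩ hp0 hp_top
  set g : L1AddLinf μ := ofLp (hmem.toLp _)
  have hg : ⇑g =ᵐ[μ] fun x => ‖f x‖ ^ p.toReal := coeFn_ofLp_toLp hmem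
  have hSg : ∀ᵐ x ∂μ, ‖S f x‖ ^ p.toReal ≤ S g x :=
    hS.convexOn_comp_le (convexOn_norm_rpow hq)
      (by simp [Real.zero_rpow (by linarith : p.toReal ≠ 0)])
      (hg.mono fun x hx => hx.ge)
  have henorm (y : ℝ) : ‖y‖ₑ ^ p.toReal = ‖‖y‖ ^ p.toReal‖ₑ := by
    rw [Real.enorm_rpow_of_nonneg (norm_nonneg y) (zero_le_one.trans hq), enorm_norm]
  rw [eLpNorm_eq_lintegral_rpow_enorm_toReal hp0 hp_top,
    eLpNorm_eq_lintegral_rpow_enorm_toReal hp0 hp_top]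
  gcongr 1
  calc ∫⁻ x, ‖S f x‖ₑ ^ p.toReal ∂μ ≤ ∫⁻ x, ‖S g x‖ₑ ∂μ := by
        refine lintegral_mono_ae (hSg.mono fun x hx => ?_)
        rw [henorm, Real.enorm_of_nonneg (by positivity),
          Real.enorm_of_nonneg (hx.trans' (by positivity))]
        exact ENNReal.ofReal_le_ofReal hx
    _ ≤ ∫⁻ x, ‖g x‖ₑ ∂μ := by
        simpa only [eLpNorm_one_eq_lintegral_enorm] using hS.eLpNorm_one_le g
    _ = ∫⁻ x, ‖f x‖ₑ ^ p.toReal ∂μ := lintegral_congr_ae (hg.mono fun x hx => by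
        simp only [hx, henorm])

/-- The contraction of `L^p(μ)` induced by a positive Dunford–Schwartz operator. -/
noncomputable def toLp [Fact (1 ≤ p)] (hS : IsDunfordSchwartz S) : Lp ℝ p μ →L[ℝ] Lp ℝ p μ :=
  LinearMap.mkContinuous
    { toFun f := ⟨S (ofLp f), Lp.mem_Lp_iff_eLpNorm_lt_top.2
        ((hS.eLpNorm_le Fact.out _).trans_lt (Lp.eLpNorm_lt_top f))⟩
      map_add' f g := Subtype.ext (congrArg Subtype.val (map_add S (ofLp f) (ofLp g)) :)
      map_smul' c f := Subtype.ext (congrArg Subtype.val (map_smul S c (ofLp f)) :) } 1 fun f => by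
    rw [one_mul]
    exact ENNReal.toReal_mono (Lp.eLpNorm_ne_top f) (hS.eLpNorm_le Fact.out _)

theorem norm_toLp_le [Fact (1 ≤ p)] (hS : IsDunfordSchwartz S) (f : Lp ℝ p μ) :
    ‖hS.toLp f‖ ≤ ‖f‖ :=
  ENNReal.toReal_mono (Lp.eLpNorm_ne_top f) (hS.eLpNorm_le Fact.out _)

end IsDunfordSchwartz

end DunfordSchwartz

section FunctionalCalculus

open Polynomial

theorem exists_mvPolynomial_algHom {R A ι : Type*} [CommSemiring R] [Semiring A] [Algebra R A]
    {a : ι → A} (ha : ∀ i j, Commute (a i) (a j)) :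
    ∃ φ : MvPolynomial ι R →ₐ[R] A, ∀ i, φ (MvPolynomial.X i) = a i := by
  have : IsMulCommutative (Algebra.adjoin R (range a)) :=
    Algebra.isMulCommutative_adjoin R (by rintro _ ⟨i, rfl⟩ _ ⟨j, rfl⟩; exact ha i j)
  let b (i : ι) : Algebra.adjoin R (range a) := ⟨a i, Algebra.subset_adjoin ⟨i, rfl⟩⟩
  open scoped IsMulCommutative in
  exact ⟨(Algebra.adjoin R (range a)).val.comp (MvPolynomial.aeval b), fun i => by simp [b]⟩

theorem aeval_cesaroPoly {A : Type*} [Semiring A] [Algebra ℝ A] (a : A) (n : ℕ) :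
    aeval a (cesaroPoly n) = (n : ℝ)⁻¹ • ∑ j ∈ Finset.range n, a ^ j := by
  simp [cesaroPoly, Algebra.smul_def]

theorem aeval_cesaroPoly_mul_one_sub {A : Type*} [Ring A] [Algebra ℝ A] (a : A) (n : ℕ) :
    aeval a (cesaroPoly n) * (1 - a) = (n : ℝ)⁻¹ • (1 - a ^ n) := by
  rw [aeval_cesaroPoly, smul_mul_assoc, geom_sum_mul_neg]

variable {ι : Type*} {μ : Measure Ω} {φ : MvPolynomial ι ℝ →ₐ[ℝ] Module.End ℝ (L1AddLinf μ)}

theorem isDunfordSchwartz_map_monomial (hφ : ∀ i, IsDunfordSchwartz (φ (MvPolynomial.X i)))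
    (x : ι →₀ ℕ) : IsDunfordSchwartz (φ (MvPolynomial.monomial x 1)) := by
  rw [MvPolynomial.monomial_eq, MvPolynomial.C_1, one_mul]
  exact ((dunfordSchwartzSubmonoid μ).comap φ).prod_mem fun i _ => pow_mem (hφ i) _

theorem map_eq_sum_coeff_smul (q : MvPolynomial ι ℝ) :
    φ q = ∑ x ∈ q.support, q.coeff x • φ (MvPolynomial.monomial x 1) := by
  conv_lhs => rw [q.as_sum, map_sum]
  refine Finset.sum_congr rfl fun x _ => ?_
  rw [← map_smul, MvPolynomial.smul_monomial, smul_eq_mul, mul_one]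

theorem isDunfordSchwartz_map (hφ : ∀ i, IsDunfordSchwartz (φ (MvPolynomial.X i)))
    {q : MvPolynomial ι ℝ} (hq : ∀ x, 0 ≤ q.coeff x) (hq1 : MvPolynomial.eval 1 q ≤ 1) :
    IsDunfordSchwartz (φ q) := by
  rw [map_eq_sum_coeff_smul]
  refine .sum_smul (fun x _ => hq x) ?_ fun x _ => isDunfordSchwartz_map_monomial hφ x
  simpa [MvPolynomial.eval_eq] using hq1

theorem map_apply_mono (hφ : ∀ i, IsDunfordSchwartz (φ (MvPolynomial.X i)))
    {q r : MvPolynomial ι ℝ} (hqr : ∀ x, q.coeff x ≤ r.coeff x) {f : L1AddLinf μ} (hf : 0 ≤ f) :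
    φ q f ≤ φ r f := by
  rw [← sub_nonneg, ← LinearMap.sub_apply, ← map_sub φ, map_eq_sum_coeff_smul]
  simp only [LinearMap.sum_apply, LinearMap.smul_apply]
  refine Finset.sum_nonneg fun x _ => smul_nonneg ?_
    ((isDunfordSchwartz_map_monomial hφ x).map_nonneg f hf)
  rw [MvPolynomial.coeff_sub, sub_nonneg]
  exact hqr x

theorem map_apply_of_forall_map_X_apply_eq {f : L1AddLinf μ}
    (hf : ∀ i, φ (MvPolynomial.X i) f = f) (q : MvPolynomial ι ℝ) :
    φ q f = MvPolynomial.eval 1 q • f := by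
  induction q using MvPolynomial.induction_on with
  | C c =>
    rw [← MvPolynomial.algebraMap_eq, φ.commutes, MvPolynomial.algebraMap_eq, MvPolynomial.eval_C,
      Module.algebraMap_end_apply]
  | add q r hq hr => simp only [map_add, LinearMap.add_apply, hq, hr, add_smul]
  | mul_X q i hq => simp [hf, hq]

end FunctionalCalculus

section MaximalInequality

open L1AddLinf Polynomial

variable {μ : Measure Ω}

theorem L1_norm_eq_integral_of_nonneg {f : Lp ℝ 1 μ} (hf : 0 ≤ f) : ‖f‖ = ∫ x, f x ∂μ := by
  rw [L1.norm_eq_integral_norm]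
  refine integral_congr_ae ?_
  filter_upwards [Lp.coeFn_nonneg f |>.2 hf] with x hx
  exact Real.norm_of_nonneg hx

/- Hopf's maximal ergodic theorem, by Garsia's argument: `M ≤ (g + V M)⁺`, so that
`M - V M ≤ g` on `{0 < M}` and `M - V M ≤ 0` elsewhere. -/
theorem setIntegral_partialSups_pos_nonneg {V : Module.End ℝ (Lp ℝ 1 μ)}
    (hV : ∀ f, 0 ≤ f → 0 ≤ V f) (hV_norm : ∀ f, ‖V f‖ ≤ ‖f‖) (g : Lp ℝ 1 μ) (N : ℕ) :
    0 ≤ ∫ x in {x | 0 < partialSups (fun n => (∑ j ∈ Finset.range n, V ^ j) g) N x}, g x ∂μ := by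
  set M : Lp ℝ 1 μ := partialSups (fun n => (∑ j ∈ Finset.range n, V ^ j) g) N
  have hV_mono {f h : Lp ℝ 1 μ} (hfh : f ≤ h) : V f ≤ V h := by
    simpa only [map_sub, sub_nonneg] using hV _ (sub_nonneg.2 hfh)
  have hle (n : ℕ) (hn : n ≤ N) : (∑ j ∈ Finset.range n, V ^ j) g ≤ M :=
    le_partialSups_of_le (fun n => (∑ j ∈ Finset.range n, V ^ j) g) hn
  have hM0 : 0 ≤ M := by simpa using hle 0 zero_le
  have hM : M ≤ (g + V M) ⊔ 0 := by
    refine partialSups_le _ _ _ fun n hn => ?_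
    rcases n with - | n
    · simp
    · refine le_sup_of_le_left ?_
      rw [Finset.sum_range_succ', add_comm]
      simp only [pow_zero, pow_succ', ← Finset.mul_sum, LinearMap.add_apply, Module.End.one_apply,
        Module.End.mul_apply]
      exact add_le_add_right (hV_mono (hle n (Nat.le_of_succ_le hn))) g
  have hset : MeasurableSet {x | 0 < M x} :=
    measurableSet_lt measurable_const (Lp.stronglyMeasurable M).measurable
  have hpointwise : ∀ᵐ x ∂μ, M x - V M x ≤ {x | 0 < M x}.indicator g x := by
    filter_upwards [Lp.coeFn_le _ _ |>.2 hM, Lp.coeFn_sup (g + V M) 0, Lp.coeFn_add g (V M),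
      Lp.coeFn_zero ℝ 1 μ, Lp.coeFn_nonneg _ |>.2 hM0, Lp.coeFn_nonneg _ |>.2 (hV M hM0)]
      with x hle hsup hadd hzero hM0 hVM0
    rw [hsup, Pi.sup_apply, hadd, hzero, Pi.add_apply, Pi.zero_apply] at hle
    rw [Pi.zero_apply] at hM0 hVM0
    by_cases hx : 0 < M x
    · rw [indicator_of_mem (by exact hx)]
      rcases le_sup_iff.1 hle with h | h <;> linarith
    · rw [indicator_of_notMem (by exact hx)]
      linarith
  calc 0 ≤ ‖M‖ - ‖V M‖ := sub_nonneg.2 (hV_norm M)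
    _ = ∫ x, (M x - V M x) ∂μ := by
      rw [integral_sub (L1.integrable_coeFn _) (L1.integrable_coeFn _),
        L1_norm_eq_integral_of_nonneg hM0, L1_norm_eq_integral_of_nonneg (hV M hM0)]
    _ ≤ ∫ x, {x | 0 < M x}.indicator g x ∂μ :=
      integral_mono_ae ((L1.integrable_coeFn _).sub (L1.integrable_coeFn _))
        ((L1.integrable_coeFn g).indicator hset) hpointwise
    _ = ∫ x in {x | 0 < M x}, g x ∂μ := integral_indicator hset

namespace IsDunfordSchwartz

variable {S : Module.End ℝ (L1AddLinf μ)}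

theorem aeval_cesaroPoly (hS : IsDunfordSchwartz S) (n : ℕ) :
    IsDunfordSchwartz (aeval S (cesaroPoly n)) := by
  rw [_root_.aeval_cesaroPoly, Finset.smul_sum]
  refine .sum_smul (fun _ _ => by positivity) ?_
    fun j _ => pow_mem (S := dunfordSchwartzSubmonoid μ) hS j
  rw [Finset.sum_const, Finset.card_range, nsmul_eq_mul]
  exact mul_inv_le_one

theorem ofLp_aeval_toLp {p : ℝ≥0∞} [Fact (1 ≤ p)] (hS : IsDunfordSchwartz S) (q : ℝ[X])
    (f : Lp ℝ p μ) :
    ofLp (aeval (hS.toLp (p := p) : Module.End ℝ (Lp ℝ p μ)) q f) = aeval S q (ofLp f) := by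
  induction q using Polynomial.induction_on' generalizing f with
  | add q r hq hr => simp only [map_add, LinearMap.add_apply, hq, hr]
  | monomial n c =>
    induction n generalizing f with
    | zero => simp [Module.algebraMap_end_apply]
    | succ n ih =>
      simp only [aeval_monomial, pow_succ, ← mul_assoc, Module.End.mul_apply] at ih ⊢
      exact ih _

end IsDunfordSchwartz

theorem mul_measure_exists_le_of_forall_exists_lt {P : ℕ → Ω → Prop} {a B : ℝ≥0∞}
    (h : ∀ N, a * μ {x | ∃ n < N, P n x} ≤ B) : a * μ {x | ∃ n, P n x} ≤ B := by
  have hunion : {x | ∃ n, P n x} = ⋃ N, {x | ∃ n < N, P n x} := by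
    ext x
    simp only [Set.mem_ofPred_eq, mem_iUnion]
    exact ⟨fun ⟨n, hn⟩ => ⟨n + 1, n, n.lt_succ_self, hn⟩, fun ⟨_, n, _, hn⟩ => ⟨n, hn⟩⟩
  have hmono : Monotone fun N => {x | ∃ n < N, P n x} :=
    fun N N' hN x ⟨n, hn, hx⟩ => ⟨n, hn.trans_le hN, hx⟩
  rw [hunion, hmono.measure_iUnion, ENNReal.mul_iSup]
  exact iSup_le h

theorem abs_indicatorConstLp_one_le {p : ℝ≥0∞} {s : Set Ω} (hs : MeasurableSet s) (hμs : μ s ≠ ∞) :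
    ∀ᵐ x ∂μ, |indicatorConstLp p hs hμs (1 : ℝ) x| ≤ 1 := by
  filter_upwards [indicatorConstLp_coeFn (p := p) (hs := hs) (hμs := hμs) (c := (1 : ℝ))] with x hx
  rw [hx]
  exact (norm_indicator_le_norm_self (fun _ => (1 : ℝ)) x).trans norm_one.le

theorem setIntegral_le_L1_norm (f : Lp ℝ 1 μ) (s : Set Ω) : ∫ x in s, f x ∂μ ≤ ‖f‖ :=
  (le_abs_self _).trans <| (norm_integral_le_integral_norm _).trans <|
    (setIntegral_le_integral (L1.integrable_coeFn f).norm
      (ae_of_all _ fun _ => norm_nonneg _)).trans_eq (L1.norm_eq_integral_norm f).symm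

theorem setIntegral_sub_smul_indicatorConstLp {s t : Set Ω} (hs : MeasurableSet s)
    (ht : MeasurableSet t) (hμt : μ t ≠ ∞) (hts : t ≤ᵐ[μ] s) (f : Lp ℝ 1 μ) (r : ℝ) :
    ∫ x in s, (f - r • indicatorConstLp 1 ht hμt (1 : ℝ)) x ∂μ =
      ∫ x in s, f x ∂μ - r * μ.real t := by
  set u := indicatorConstLp 1 ht hμt (1 : ℝ)
  have hcoeFn : ⇑(f - r • u) =ᵐ[μ] fun x => f x - r * u x := by
    filter_upwards [Lp.coeFn_sub f (r • u), Lp.coeFn_smul r u] with x hsub hsmul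
    rw [hsub, Pi.sub_apply, hsmul, Pi.smul_apply, smul_eq_mul]
  have hinter : (t ∩ s : Set Ω) =ᵐ[μ] t := inter_eventuallyEq_left.2 hts
  rw [integral_congr_ae (ae_restrict_of_ae hcoeFn), integral_sub
    (L1.integrable_coeFn f).integrableOn ((L1.integrable_coeFn u).integrableOn.const_mul r),
    integral_const_mul, setIntegral_indicatorConstLp hs, smul_eq_mul, mul_one,
    measureReal_congr hinter]

namespace IsDunfordSchwartz

variable {S : Module.End ℝ (L1AddLinf μ)}

theorem ae_partialSups_pos (hS : IsDunfordSchwartz S) (g : Lp ℝ 1 μ) (N : ℕ) :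
    ∀ᵐ x ∂μ, ∀ n < N, 0 < aeval S (cesaroPoly (n + 1)) (ofLp g) x →
      0 < partialSups (fun n => (∑ j ∈ Finset.range n,
        (hS.toLp (p := 1) : Module.End ℝ (Lp ℝ 1 μ)) ^ j) g) N x := by
  rw [ae_all_iff]
  intro n
  by_cases hn : n < N
  · set V : Module.End ℝ (Lp ℝ 1 μ) := (hS.toLp (p := 1)).toLinearMap
    have hsum : (∑ j ∈ Finset.range (n + 1), V ^ j) g =
        ((n + 1 : ℕ) : ℝ) • aeval V (cesaroPoly (n + 1)) g := by
      rw [_root_.aeval_cesaroPoly, LinearMap.smul_apply, smul_inv_smul₀ (by positivity)]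
    have hle := le_partialSups_of_le (fun n => (∑ j ∈ Finset.range n, V ^ j) g)
      (Nat.succ_le_of_lt hn)
    filter_upwards [(Lp.coeFn_le _ _).2 hle,
      Lp.coeFn_smul ((n + 1 : ℕ) : ℝ) (aeval V (cesaroPoly (n + 1)) g)] with x hx hsmul _ hpos
    refine lt_of_lt_of_le ?_ hx
    rw [hsum, hsmul]
    rw [← hS.ofLp_aeval_toLp, coeFn_ofLp] at hpos
    exact mul_pos (by positivity) hpos
  · exact ae_of_all _ fun x h => absurd h hn

theorem ae_cesaro_sub_smul_pos (hS : IsDunfordSchwartz S) (f : Lp ℝ 1 μ) {u : Lp ℝ 1 μ}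
    (hu : ∀ᵐ x ∂μ, |u x| ≤ 1) {r : ℝ} (hr : 0 < r) :
    ∀ᵐ x ∂μ, ∀ n, r < aeval S (cesaroPoly n) (ofLp f) x →
      0 < aeval S (cesaroPoly n) (ofLp (f - r • u)) x := by
  refine ae_all_iff.2 fun n => ?_
  rw [map_sub, map_smul, map_sub, map_smul]
  filter_upwards [(hS.aeval_cesaroPoly n).abs_le_of_abs_le (f := ofLp u) zero_le_one hu,
    coeFn_sub (aeval S (cesaroPoly n) (ofLp f)) (r • aeval S (cesaroPoly n) (ofLp u)),
    coeFn_smul r (aeval S (cesaroPoly n) (ofLp u))] with x hux hsub hsmul hx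
  rw [hsub, Pi.sub_apply, hsmul, Pi.smul_apply, smul_eq_mul]
  nlinarith [(_root_.abs_le.1 hux).2]

/- Hopf's inequality is applied to `f - r • 1_D`, where `D` is the set being measured: the averages
of `1_D` are at most `1`, so those of `f - r • 1_D` are somewhere positive on `D`. -/
theorem mul_measure_exists_lt_lt_cesaro_le (hS : IsDunfordSchwartz S) (f : Lp ℝ 1 μ) {r : ℝ}
    (hr : 0 < r) (N : ℕ) :
    ENNReal.ofReal r * μ {x | ∃ n < N, r < aeval S (cesaroPoly (n + 1)) (ofLp f) x} ≤ ‖f‖ₑ := by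
  set D := {x | ∃ n < N, r < aeval S (cesaroPoly (n + 1)) (ofLp f) x} with hD_def
  have hD_union : D = ⋃ n ∈ Finset.range N, {x | r < aeval S (cesaroPoly (n + 1)) (ofLp f) x} := by
    ext x
    simp [hD_def]
  have hD : MeasurableSet D := hD_union ▸ Finset.measurableSet_biUnion _ fun n _ =>
    measurableSet_lt measurable_const (AEEqFun.measurable _)
  have hD_fin : μ D ≠ ∞ := by
    rw [hD_union]
    refine ((measure_biUnion_lt_top (Finset.finite_toSet _)) fun n _ => ?_).ne
    simp only [← hS.ofLp_aeval_toLp, coeFn_ofLp]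
    exact (L1.integrable_coeFn _).measure_gt_lt_top hr
  set u : Lp ℝ 1 μ := indicatorConstLp 1 hD hD_fin 1
  set M := partialSups (fun n => (∑ j ∈ Finset.range n,
    (hS.toLp (p := 1) : Module.End ℝ (Lp ℝ 1 μ)) ^ j) (f - r • u)) N
  have hM : MeasurableSet {x | 0 < M x} :=
    measurableSet_lt measurable_const (Lp.stronglyMeasurable M).measurable
  have hDM : D ≤ᵐ[μ] {x | 0 < M x} := by
    filter_upwards [hS.ae_cesaro_sub_smul_pos f (abs_indicatorConstLp_one_le hD hD_fin) hr,
      hS.ae_partialSups_pos (f - r • u) N] with x hx hxM ⟨n, hn, hrn⟩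
    exact hxM n hn (hx (n + 1) hrn)
  have hHopf : 0 ≤ ∫ x in {x | 0 < M x}, (f - r • u) x ∂μ :=
    setIntegral_partialSups_pos_nonneg (fun f hf => hS.map_nonneg (ofLp f) hf)
      hS.norm_toLp_le (f - r • u) N
  rw [setIntegral_sub_smul_indicatorConstLp hM hD hD_fin hDM] at hHopf
  calc ENNReal.ofReal r * μ D = ENNReal.ofReal (r * μ.real D) := by
        rw [ENNReal.ofReal_mul hr.le, ofReal_measureReal hD_fin]
    _ ≤ ENNReal.ofReal ‖f‖ :=
        ENNReal.ofReal_le_ofReal (by linarith [setIntegral_le_L1_norm f {x | 0 < M x}])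
    _ = ‖f‖ₑ := ofReal_norm f

theorem mul_measure_exists_lt_cesaro_le (hS : IsDunfordSchwartz S) (f : Lp ℝ 1 μ) {r : ℝ}
    (hr : 0 < r) :
    ENNReal.ofReal r * μ {x | ∃ n, r < aeval S (cesaroPoly (n + 1)) (ofLp f) x} ≤ ‖f‖ₑ :=
  mul_measure_exists_le_of_forall_exists_lt (hS.mul_measure_exists_lt_lt_cesaro_le f hr)

end IsDunfordSchwartz

end MaximalInequality

section WeakType

open L1AddLinf Polynomial

variable {μ : Measure Ω}

/-- The maximal operator `f ↦ sup_k |A k f|` is of weak type `(p, p)`; the constant `C` bounds the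
`p`-th power of its weak-type norm. -/
def HasWeakType (A : ℕ → Module.End ℝ (L1AddLinf μ)) (p : ℝ≥0∞) [Fact (1 ≤ p)] (C : ℝ≥0∞) : Prop :=
  ∀ (f : Lp ℝ p μ) (r : ℝ), 0 < r →
    ENNReal.ofReal r ^ p.toReal * μ {x | ∃ k, r < |A k (ofLp f) x|} ≤ C * ‖f‖ₑ ^ p.toReal

namespace HasWeakType

variable {A : ℕ → Module.End ℝ (L1AddLinf μ)} {p : ℝ≥0∞} [Fact (1 ≤ p)] {C : ℝ≥0∞}

theorem of_weakType_one (hA : HasWeakType A 1 C) (hA_ds : ∀ k, IsDunfordSchwartz (A k))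
    (hp : p ≠ ∞) : HasWeakType A p (2 ^ p.toReal * C) := by
  intro f r hr
  have hq : 1 ≤ p.toReal := by simpa using ENNReal.toReal_mono hp (Fact.out : 1 ≤ p)
  obtain ⟨g, h, hfgh, hh, hg⟩ := exists_truncation hp f (half_pos hr)
  have hsplit : ofLp f = ofLp g + ofLp h := Subtype.ext hfgh
  have hsubset : {x | ∃ k, r < |A k (ofLp f) x|} ≤ᵐ[μ] {x | ∃ k, r / 2 < |A k (ofLp g) x|} := by
    filter_upwards [
      ae_all_iff.2 fun k => (hA_ds k).abs_le_of_abs_le (f := ofLp h) (half_pos hr).le hh,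
      ae_all_iff.2 fun k => coeFn_add (A k (ofLp g)) (A k (ofLp h))] with x hx hadd ⟨k, hk⟩
    refine ⟨k, ?_⟩
    rw [hsplit, map_add, hadd, Pi.add_apply] at hk
    linarith [hx k, abs_add_le (A k (ofLp g) x) (A k (ofLp h) x)]
  set s := ENNReal.ofReal (r / 2) with hs
  have hrs : ENNReal.ofReal r ^ p.toReal = 2 ^ p.toReal * (s ^ (p.toReal - 1) * s) := by
    have hr2 : ENNReal.ofReal r = 2 * s := by
      rw [hs, ← ENNReal.ofReal_ofNat 2, ← ENNReal.ofReal_mul zero_le_two,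
        mul_div_cancel₀ r two_ne_zero]
    have hpow : s ^ (p.toReal - 1) * s = s ^ p.toReal := by
      simpa using (ENNReal.rpow_add_of_nonneg (x := s) (p.toReal - 1) 1
        (by linarith) zero_le_one).symm
    rw [hr2, ENNReal.mul_rpow_of_nonneg _ _ (by linarith), hpow]
  calc ENNReal.ofReal r ^ p.toReal * μ {x | ∃ k, r < |A k (ofLp f) x|}
      ≤ ENNReal.ofReal r ^ p.toReal * μ {x | ∃ k, r / 2 < |A k (ofLp g) x|} := by
        gcongr 1
        exact measure_mono_ae hsubset
    _ = 2 ^ p.toReal * (s ^ (p.toReal - 1) * (s * μ {x | ∃ k, r / 2 < |A k (ofLp g) x|})) := by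
        rw [hrs, mul_assoc, mul_assoc]
    _ ≤ 2 ^ p.toReal * (s ^ (p.toReal - 1) * (C * ‖g‖ₑ)) := by
        gcongr 2
        simpa using hA g (r / 2) (half_pos hr)
    _ = 2 ^ p.toReal * C * (s ^ (p.toReal - 1) * ‖g‖ₑ) := by ring
    _ ≤ 2 ^ p.toReal * C * ‖f‖ₑ ^ p.toReal := by gcongr

end HasWeakType

variable {ι : Type*} [Fintype ι] {φ : MvPolynomial ι ℝ →ₐ[ℝ] Module.End ℝ (L1AddLinf μ)}

theorem isDunfordSchwartz_map_cesaroMvPoly (hφ : ∀ i, IsDunfordSchwartz (φ (MvPolynomial.X i)))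
    (n : ι → ℕ) : IsDunfordSchwartz (φ (cesaroMvPoly n)) :=
  isDunfordSchwartz_map hφ (coeff_cesaroMvPoly_nonneg n) (eval_one_cesaroMvPoly_le_one n)

theorem abs_map_cesaroMvPoly_le (hφ : ∀ i, IsDunfordSchwartz (φ (MvPolynomial.X i))) {n : ι → ℕ}
    {C : ℝ} {P : MvPolynomial ι ℝ} {N : ℕ}
    (hP : ∀ x, (cesaroMvPoly n).coeff x ≤ C * (aeval P (cesaroPoly N)).coeff x) (f : Lp ℝ 1 μ) :
    ∀ᵐ x ∂μ, |φ (cesaroMvPoly n) (ofLp f) x| ≤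
      aeval (φ P) (cesaroPoly N) (ofLp (C • |f|)) x := by
  have hmono : φ (cesaroMvPoly n) (ofLp |f|) ≤ φ (C • aeval P (cesaroPoly N)) (ofLp |f|) :=
    map_apply_mono hφ (by simpa using hP) (show 0 ≤ |f| from abs_nonneg f)
  rw [map_smul, ← aeval_algHom_apply, LinearMap.smul_apply, ← map_smul, ← map_smul] at hmono
  filter_upwards [coeFn_le.2 hmono, (isDunfordSchwartz_map_cesaroMvPoly hφ n).abs_le
    (f := ofLp f) (g := ofLp |f|) ((Lp.coeFn_abs f).mono fun x hx => hx.ge)] with x hle habs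
  exact habs.trans hle

theorem exists_hasWeakType_one_cesaroMvPoly (hφ : ∀ i, IsDunfordSchwartz (φ (MvPolynomial.X i)))
    {n : ℕ → ι → ℕ} {c : ℝ} (hn : ∀ k i j, n k j ≠ 0 → (n k i : ℝ) ≤ c * n k j) :
    ∃ C, C ≠ ∞ ∧ HasWeakType (fun k => φ (cesaroMvPoly (n k))) 1 C := by
  obtain ⟨C, hC, hdom⟩ := exists_coeff_cesaroMvPoly_le ι c
  refine ⟨ENNReal.ofReal C, ENNReal.ofReal_ne_top, fun f r hr => ?_⟩
  rw [ENNReal.toReal_one, ENNReal.rpow_one, ENNReal.rpow_one]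
  refine mul_measure_exists_le_of_forall_exists_lt fun k₀ => ?_
  obtain ⟨P, hP, hP1, hdom⟩ := hdom n hn k₀
  have hsubset : {x | ∃ k < k₀, r < |φ (cesaroMvPoly (n k)) (ofLp f) x|} ≤ᵐ[μ]
      {x | ∃ N, r < aeval (φ P) (cesaroPoly (N + 1)) (ofLp (C • |f|)) x} := by
    have hle : ∀ᵐ x ∂μ, ∀ k < k₀, ∃ N, |φ (cesaroMvPoly (n k)) (ofLp f) x| ≤
        aeval (φ P) (cesaroPoly (N + 1)) (ofLp (C • |f|)) x := by
      simp only [ae_all_iff]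
      intro k hk
      obtain ⟨N, hN, hle⟩ := hdom k hk
      obtain ⟨N, rfl⟩ := Nat.exists_eq_succ_of_ne_zero hN
      exact (abs_map_cesaroMvPoly_le hφ hle f).mono fun x hx => ⟨N, hx⟩
    filter_upwards [hle] with x hx ⟨k, hk, hr⟩
    exact (hx k hk).imp fun N hN => hr.trans_le hN
  calc ENNReal.ofReal r * μ {x | ∃ k < k₀, r < |φ (cesaroMvPoly (n k)) (ofLp f) x|}
      ≤ ENNReal.ofReal r *
          μ {x | ∃ N, r < aeval (φ P) (cesaroPoly (N + 1)) (ofLp (C • |f|)) x} := by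
        gcongr 1
        exact measure_mono_ae hsubset
    _ ≤ ‖C • |f|‖ₑ := (isDunfordSchwartz_map hφ hP hP1).mul_measure_exists_lt_cesaro_le _ hr
    _ = ENNReal.ofReal C * ‖f‖ₑ := by
      rw [enorm_smul, Real.enorm_of_nonneg hC, ← ofReal_norm |f|, norm_abs_eq_norm, ofReal_norm]

end WeakType

section AlmostUniform

variable {μ : Measure Ω} {E : Type*} {F G : ℕ → Ω → E}

/-- Almost uniform Cauchy sequences, expressed through the measures of the sets where the tails of
the sequence oscillate. -/
def AuCauchy [PseudoMetricSpace E] (μ : Measure Ω) (F : ℕ → Ω → E) : Prop :=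
  ∀ δ > 0, Tendsto (fun N => μ {x | ∃ k ≥ N, ∃ l ≥ N, δ < dist (F k x) (F l x)}) atTop (𝓝 0)

namespace AuCauchy

section PseudoMetricSpace

variable [PseudoMetricSpace E]

theorem congr (hF : AuCauchy μ F) (hFG : ∀ k, F k =ᵐ[μ] G k) : AuCauchy μ G := by
  refine fun δ hδ => (hF δ hδ).congr fun N => measure_congr (eventuallyEq_set.2 ?_)
  filter_upwards [ae_all_iff.2 hFG] with x hx
  simp only [hx]

theorem exists_uniformCauchySeqOn (hF : AuCauchy μ F) {ε : ℝ≥0∞} (hε : ε ≠ 0) :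
    ∃ s, MeasurableSet s ∧ μ sᶜ ≤ ε ∧ UniformCauchySeqOn F atTop s := by
  obtain ⟨η, hη, hηε⟩ := ENNReal.exists_pos_sum_of_countable' hε ℕ
  have htail (m : ℕ) :
      ∃ N, μ {x | ∃ k ≥ N, ∃ l ≥ N, 1 / (m + 1 : ℝ) < dist (F k x) (F l x)} ≤ η m :=
    ((ENNReal.tendsto_nhds_zero.1 (hF _ Nat.one_div_pos_of_nat)) (η m) (hη m)).exists
  choose N hN using htail
  set bad := fun m : ℕ => {x | ∃ k ≥ N m, ∃ l ≥ N m, 1 / (m + 1 : ℝ) < dist (F k x) (F l x)}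
  refine ⟨(toMeasurable μ (⋃ m, bad m))ᶜ, (measurableSet_toMeasurable _ _).compl, ?_, ?_⟩
  · rw [compl_compl, measure_toMeasurable]
    exact (measure_iUnion_le bad).trans ((ENNReal.tsum_le_tsum hN).trans hηε.le)
  · refine Metric.uniformCauchySeqOn_iff.2 fun δ hδ => ?_
    obtain ⟨m, hm⟩ := exists_nat_one_div_lt hδ
    refine ⟨N m, fun k hk l hl x hx => lt_of_le_of_lt (not_lt.1 fun hlt => hx ?_) hm⟩
    exact subset_toMeasurable μ _ (mem_iUnion.2 ⟨m, k, hk, l, hl, hlt⟩)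

theorem ae_cauchySeq (hF : AuCauchy μ F) : ∀ᵐ x ∂μ, CauchySeq fun k => F k x := by
  refine ae_iff.2 (nonpos_iff_eq_zero.1 (le_of_forall_gt_imp_ge_of_dense fun ε hε => ?_))
  obtain ⟨s, -, hs, hcauchy⟩ := hF.exists_uniformCauchySeqOn hε.ne'
  exact (measure_mono fun x (hx : ¬CauchySeq _) hxs => hx (hcauchy.cauchy_map hxs)).trans hs

end PseudoMetricSpace

section SeminormedAddCommGroup

variable [SeminormedAddCommGroup E]

theorem of_tendsto_eLpNorm_top {g : Ω → E}
    (hF : Tendsto (fun k => eLpNorm (F k - g) ∞ μ) atTop (𝓝 0)) : AuCauchy μ F := by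
  intro δ hδ
  obtain ⟨N₀, hN₀⟩ := eventually_atTop.1
    (ENNReal.tendsto_nhds_zero.1 hF _ (ENNReal.ofReal_pos.2 (half_pos hδ)))
  have hclose : ∀ᵐ x ∂μ, ∀ k ≥ N₀, dist (F k x) (g x) ≤ δ / 2 := by
    simp only [ae_all_iff]
    intro k hk
    filter_upwards [ae_le_eLpNormEssSup (f := F k - g) (μ := μ)] with x hx
    rw [dist_eq_norm, ← ENNReal.ofReal_le_ofReal_iff (half_pos hδ).le, ofReal_norm]
    exact hx.trans (hN₀ k hk)
  refine tendsto_const_nhds.congr' ?_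
  filter_upwards [eventually_ge_atTop N₀] with N hN
  refine (measure_eq_zero_iff_ae_notMem.2 ?_).symm
  filter_upwards [hclose] with x hx
  rintro ⟨k, hk, l, hl, hlt⟩
  linarith [dist_triangle_right (F k x) (F l x) (g x), hx k (hN.trans hk), hx l (hN.trans hl)]

theorem add (hF : AuCauchy μ F) (hG : AuCauchy μ G) : AuCauchy μ (F + G) := by
  intro δ hδ
  refine tendsto_of_tendsto_of_tendsto_of_le_of_le tendsto_const_nhds
    (by simpa using (hF _ (half_pos hδ)).add (hG _ (half_pos hδ))) (fun _ => zero_le) fun N => ?_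
  refine (measure_mono fun x => ?_).trans (measure_union_le _ _)
  rintro ⟨k, hk, l, hl, hlt⟩
  by_contra! hx
  simp only [mem_union, Set.mem_ofPred_eq, not_or, not_exists, not_and, not_lt] at hx
  linarith [dist_add_add_le (F k x) (G k x) (F l x) (G l x), hx.1 k hk l hl, hx.2 k hk l hl,
    show dist ((F + G) k x) ((F + G) l x) = dist (F k x + G k x) (F l x + G l x) from rfl]

theorem const_smul {𝕜 : Type*} [NormedField 𝕜] [NormedSpace 𝕜 E] (c : 𝕜) (hF : AuCauchy μ F) :
    AuCauchy μ (c • F) := by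
  intro δ hδ
  refine tendsto_of_tendsto_of_tendsto_of_le_of_le tendsto_const_nhds
    (hF (δ / (‖c‖ + 1)) (by positivity)) (fun _ => zero_le) fun N => measure_mono ?_
  rintro x ⟨k, hk, l, hl, hlt⟩
  refine ⟨k, hk, l, hl, (div_lt_iff₀ (by positivity)).2 (hlt.trans_le ?_)⟩
  rw [Pi.smul_apply, Pi.smul_apply, Pi.smul_apply, Pi.smul_apply, dist_smul₀, mul_comm]
  gcongr
  linarith

end SeminormedAddCommGroup

end AuCauchy

theorem tendsto_eLpNorm_top_indicator_sub [NormedAddCommGroup E] {g : Ω → E} {s : Set Ω}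
    (hF : UniformCauchySeqOn F atTop s) (hg : ∀ᵐ x ∂μ, Tendsto (fun k => F k x) atTop (𝓝 (g x))) :
    Tendsto (fun k => eLpNorm (s.indicator (F k - g)) ∞ μ) atTop (𝓝 0) := by
  set t := {x ∈ s | Tendsto (fun k => F k x) atTop (𝓝 (g x))}
  have hunif : TendstoUniformlyOn F g atTop t :=
    (hF.mono (sep_subset _ _)).tendstoUniformlyOn_of_tendsto fun x hx => hx.2
  refine ENNReal.tendsto_nhds_zero.2 fun η hη => ?_
  obtain ⟨δ, hδ, hδη⟩ := ENNReal.lt_iff_exists_nnreal_btwn.1 hη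
  filter_upwards [Metric.tendstoUniformlyOn_iff.1 hunif δ (by simpa using hδ)] with k hk
  refine le_trans ?_ hδη.le
  rw [eLpNorm_exponent_top, ← ENNReal.ofReal_coe_nnreal]
  refine eLpNormEssSup_le_of_ae_bound (hg.mono fun x hx => ?_)
  by_cases hxs : x ∈ s
  · rw [indicator_of_mem hxs, Pi.sub_apply, ← dist_eq_norm, dist_comm]
    exact (hk x ⟨hxs, hx⟩).le
  · simp [indicator_of_notMem hxs]

theorem AuCauchy.exists_auTendsto {F : ℕ → Ω →ₘ[μ] ℝ} (hF : AuCauchy μ fun k => ⇑(F k))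
    {p C : ℝ≥0∞} (hC : C ≠ ∞) (hF_le : ∀ k, eLpNorm (F k) p μ ≤ C) :
    ∃ g : Ω →ₘ[μ] ℝ, eLpNorm g p μ ≠ ∞ ∧ AuTendsto μ atTop F g := by
  obtain ⟨g, hg_meas, hg⟩ := exists_stronglyMeasurable_limit_of_tendsto_ae
    (fun k => (F k).aestronglyMeasurable)
    (hF.ae_cauchySeq.mono fun x hx => cauchySeq_tendsto_of_complete hx)
  have hmk := AEEqFun.coeFn_mk (μ := μ) g hg_meas.aestronglyMeasurable
  refine ⟨AEEqFun.mk g hg_meas.aestronglyMeasurable, ?_, fun ε hε => ?_⟩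
  · rw [eLpNorm_congr_ae hmk]
    exact ne_top_of_le_ne_top hC ((Lp.eLpNorm_lim_le_liminf_eLpNorm
      (fun k => (F k).aestronglyMeasurable) g hg).trans
      (liminf_le_of_frequently_le' (.of_forall hF_le)))
  · obtain ⟨s, hs, hμs, hcauchy⟩ := hF.exists_uniformCauchySeqOn (ENNReal.ofReal_pos.2 hε).ne'
    refine ⟨s, hs, hμs, (tendsto_eLpNorm_top_indicator_sub hcauchy hg).congr fun k => ?_⟩
    refine eLpNorm_congr_ae ?_
    filter_upwards [AEEqFun.coeFn_sub (F k) (AEEqFun.mk g hg_meas.aestronglyMeasurable), hmk]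
      with x hsub hgx
    by_cases hx : x ∈ s
    · rw [indicator_of_mem hx, indicator_of_mem hx, hsub, Pi.sub_apply, Pi.sub_apply, hgx]
    · rw [indicator_of_notMem hx, indicator_of_notMem hx]

end AlmostUniform

section BanachPrinciple

open L1AddLinf

variable {μ : Measure Ω} {p : ℝ≥0∞} [Fact (1 ≤ p)] {A : ℕ → Module.End ℝ (L1AddLinf μ)}

variable (p A) in
/-- The space of those `f ∈ L^p(μ)` for which the sequence `A k f` is almost uniformly Cauchy. -/
def auCauchySubmodule : Submodule ℝ (Lp ℝ p μ) where
  carrier := {f | AuCauchy μ fun k => ⇑(A k (ofLp f))}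
  add_mem' {f g} hf hg := (AuCauchy.add hf hg).congr fun k => by
    rw [map_add, map_add]
    exact (coeFn_add _ _).symm
  zero_mem' := AuCauchy.of_tendsto_eLpNorm_top (g := 0) (tendsto_const_nhds.congr fun k => by
    rw [map_zero, map_zero, sub_zero]
    exact eLpNorm_aeeqFun_zero.symm)
  smul_mem' c f hf := (AuCauchy.const_smul c hf).congr fun k => by
    rw [map_smul, map_smul]
    exact (coeFn_smul _ _).symm

theorem mem_auCauchySubmodule {f : Lp ℝ p μ} :
    f ∈ auCauchySubmodule p A ↔ AuCauchy μ fun k => ⇑(A k (ofLp f)) :=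
  Iff.rfl

namespace HasWeakType

variable {C : ℝ≥0∞}

theorem tendsto_measure (hA : HasWeakType A p C) (hC : C ≠ ∞) (hp : p ≠ ∞) {r : ℝ} (hr : 0 < r) :
    Tendsto (fun f : Lp ℝ p μ => μ {x | ∃ k, r < |A k (ofLp f) x|}) (𝓝 0) (𝓝 0) := by
  have hq : 0 < p.toReal := ENNReal.toReal_pos (one_pos.trans_le Fact.out).ne' hp
  have hr0 : ENNReal.ofReal r ^ p.toReal ≠ 0 :=
    (ENNReal.rpow_pos (ENNReal.ofReal_pos.2 hr) ENNReal.ofReal_ne_top).ne'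
  have hr_top : ENNReal.ofReal r ^ p.toReal ≠ ∞ :=
    ENNReal.rpow_ne_top_of_nonneg hq.le ENNReal.ofReal_ne_top
  have hnorm : Tendsto (fun f : Lp ℝ p μ => ‖f‖ₑ ^ p.toReal) (𝓝 0) (𝓝 0) := by
    have hcont : Continuous fun f : Lp ℝ p μ => ‖f‖ₑ ^ p.toReal :=
      ENNReal.continuous_rpow_const.comp continuous_enorm
    simpa [hq] using hcont.tendsto 0
  have hbound := ENNReal.Tendsto.div_const (ENNReal.Tendsto.const_mul hnorm (Or.inr hC))
    (Or.inr hr0)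
  rw [mul_zero, ENNReal.zero_div] at hbound
  refine tendsto_of_tendsto_of_tendsto_of_le_of_le tendsto_const_nhds hbound
    (fun _ => zero_le) fun f => ?_
  exact (ENNReal.le_div_iff_mul_le (.inl hr0) (.inl hr_top)).2 (mul_comm _ (μ _) ▸ hA f r hr)

theorem isClosed_auCauchySubmodule (hA : HasWeakType A p C) (hC : C ≠ ∞) (hp : p ≠ ∞) :
    IsClosed (auCauchySubmodule p A : Set (Lp ℝ p μ)) := by
  refine isClosed_of_closure_subset fun f hf δ hδ => ENNReal.tendsto_nhds_zero.2 fun ε hε => ?_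
  have hδ3 : 0 < δ / 3 := by positivity
  have hε2 : 0 < ε / 2 := ENNReal.half_pos hε.ne'
  have hsub : Tendsto (fun g => f - g) (𝓝 f) (𝓝 0) := by
    have hcont : Continuous fun g : Lp ℝ p μ => f - g := by fun_prop
    simpa only [sub_self] using hcont.tendsto f
  obtain ⟨g, hg, hfg⟩ := ((mem_closure_iff_frequently.1 hf).and_eventually (hsub.eventually
    (ENNReal.tendsto_nhds_zero.1 (hA.tendsto_measure hC hp hδ3) _ hε2))).exists
  filter_upwards [ENNReal.tendsto_nhds_zero.1 (hg _ hδ3) _ hε2] with N hN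
  have hdecomp : ∀ᵐ x ∂μ, ∀ k, A k (ofLp (f - g)) x = A k (ofLp f) x - A k (ofLp g) x := by
    refine ae_all_iff.2 fun k => ?_
    rw [map_sub, map_sub]
    exact coeFn_sub _ _
  calc μ {x | ∃ k ≥ N, ∃ l ≥ N, δ < dist (A k (ofLp f) x) (A l (ofLp f) x)}
      ≤ μ ({x | ∃ k, δ / 3 < |A k (ofLp (f - g)) x|} ∪
          {x | ∃ k ≥ N, ∃ l ≥ N, δ / 3 < dist (A k (ofLp g) x) (A l (ofLp g) x)}) := by
        refine measure_mono_ae ?_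
        filter_upwards [hdecomp] with x hx ⟨k, hk, l, hl, hlt⟩
        refine or_iff_not_imp_left.2 fun hmax => ⟨k, hk, l, hl, ?_⟩
        have hclose (k : ℕ) : dist (A k (ofLp f) x) (A k (ofLp g) x) ≤ δ / 3 := by
          rw [Real.dist_eq, ← hx k]
          exact not_lt.1 fun hlt => hmax ⟨k, hlt⟩
        linarith [dist_triangle4_right (A k (ofLp f) x) (A l (ofLp f) x) (A k (ofLp g) x)
          (A l (ofLp g) x), hclose k, hclose l]
    _ ≤ ε / 2 + ε / 2 := (measure_union_le _ _).trans (add_le_add hfg hN)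
    _ = ε := ENNReal.add_halves ε

end HasWeakType

end BanachPrinciple

section Density

theorem eq_top_of_forall_sub_mem_of_fixed_mem {𝕜 H ι : Type*} [RCLike 𝕜] [NormedAddCommGroup H]
    [InnerProductSpace 𝕜 H] [CompleteSpace H] {V : ι → H → H} (hV : ∀ i x, ‖V i x‖ ≤ ‖x‖)
    {K : Submodule 𝕜 H} (hK : IsClosed (K : Set H)) (hK_sub : ∀ i x, x - V i x ∈ K)
    (hK_fixed : ∀ x, (∀ i, V i x = x) → x ∈ K) : K = ⊤ := by
  rw [← hK.submodule_topologicalClosure_eq, Submodule.topologicalClosure_eq_top_iff,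
    Submodule.eq_bot_iff]
  intro x hx
  have hfixed (i : ι) : V i x = x := by
    refine eq_of_norm_le_re_inner_eq_norm_sq (𝕜 := 𝕜) (hV i x) ?_
    have horth := hx _ (hK_sub i x)
    rw [inner_sub_left, sub_eq_zero] at horth
    rw [← horth, inner_self_eq_norm_sq]
  exact inner_self_eq_zero.1 (hx x (hK_fixed x hfixed))

theorem eq_top_of_forall_indicatorConstLp_mem {𝕜 E : Type*} [NormedRing 𝕜] [NormedAddCommGroup E]
    [Module 𝕜 E] [IsBoundedSMul 𝕜 E] {μ : Measure Ω} {p : ℝ≥0∞} [Fact (1 ≤ p)] (hp : p ≠ ∞)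
    {K : Submodule 𝕜 (Lp E p μ)} (hK : IsClosed (K : Set (Lp E p μ)))
    (hK_mem : ∀ (s : Set Ω) (hs : MeasurableSet s) (hμs : μ s ≠ ∞) (c : E),
      indicatorConstLp p hs hμs c ∈ K) : K = ⊤ := by
  refine Submodule.eq_top_iff'.2 fun f => ?_
  induction f using Lp.induction hp with
  | indicatorConst c hs hμs => exact hK_mem _ hs hμs.ne c
  | add hf hg _ hfK hgK => exact add_mem hfK hgK
  | isClosed => exact hK

end Density

section Convergence

open L1AddLinf

variable {μ : Measure Ω} {p : ℝ≥0∞} {ι : Type*} [Fintype ι]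
  {φ : MvPolynomial ι ℝ →ₐ[ℝ] Module.End ℝ (L1AddLinf μ)}

theorem eLpNorm_map_cesaroMvPoly_sub_le (hφ : ∀ i, IsDunfordSchwartz (φ (MvPolynomial.X i)))
    (hp : 1 ≤ p) (n : ι → ℕ) (i : ι) (f : L1AddLinf μ) :
    eLpNorm (φ (cesaroMvPoly n) (f - φ (MvPolynomial.X i) f)) p μ ≤
      ‖(n i : ℝ)⁻¹‖ₑ * (2 * eLpNorm f p μ) := by
  classical
  set q := tensorPoly (Function.update (fun j => cesaroPoly (n j)) i 1)
  have hq : IsDunfordSchwartz (φ q) := isDunfordSchwartz_map hφ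
    (coeff_tensorPoly_nonneg ((Function.forall_update_iff _ fun _ r => r ∈ nonnegCoeff).2
      ⟨one_mem _, fun j _ => cesaroPoly_mem_nonnegCoeff (n j)⟩))
    (eval_one_tensorPoly_le_one ((Function.forall_update_iff _ fun _ r => r ∈ nonnegCoeff).2
      ⟨one_mem _, fun j _ => cesaroPoly_mem_nonnegCoeff (n j)⟩)
      ((Function.forall_update_iff _ fun _ r => Polynomial.eval 1 r ≤ 1).2
        ⟨Polynomial.eval_one.le, fun j _ => eval_one_cesaroPoly_le_one (n j)⟩))
  have htelescope : φ (cesaroMvPoly n) (f - φ (MvPolynomial.X i) f) =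
      (n i : ℝ)⁻¹ • φ q (f - φ (MvPolynomial.X i ^ n i) f) := by
    have hpoly : cesaroMvPoly n * (1 - MvPolynomial.X i) =
        (n i : ℝ)⁻¹ • (q * (1 - MvPolynomial.X i ^ n i)) := by
      rw [cesaroMvPoly, tensorPoly_eq_aeval_mul_tensorPoly_update _ i, mul_right_comm,
        aeval_cesaroPoly_mul_one_sub, smul_mul_assoc, mul_comm]
    simpa using congrArg (fun r => φ r f) hpoly
  have hpow : IsDunfordSchwartz (φ (MvPolynomial.X i ^ n i)) := by
    rw [map_pow]
    exact pow_mem (S := dunfordSchwartzSubmonoid μ) (hφ i) _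
  rw [htelescope, L1AddLinf.eLpNorm_smul, two_mul]
  gcongr
  calc eLpNorm (φ q (f - φ (MvPolynomial.X i ^ n i) f)) p μ
      ≤ eLpNorm (f - φ (MvPolynomial.X i ^ n i) f : L1AddLinf μ) p μ := hq.eLpNorm_le hp _
    _ ≤ eLpNorm f p μ + eLpNorm (φ (MvPolynomial.X i ^ n i) f) p μ :=
        L1AddLinf.eLpNorm_sub_le hp _ _
    _ ≤ eLpNorm f p μ + eLpNorm f p μ := by
        gcongr
        exact hpow.eLpNorm_le hp f

variable {n : ℕ → ι → ℕ}

theorem auCauchy_map_cesaroMvPoly_sub (hφ : ∀ i, IsDunfordSchwartz (φ (MvPolynomial.X i))) {i : ι}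
    (hn : Tendsto (fun k => n k i) atTop atTop) {f : L1AddLinf μ} (hf : eLpNorm f ∞ μ ≠ ∞) :
    AuCauchy μ fun k => ⇑(φ (cesaroMvPoly (n k)) (f - φ (MvPolynomial.X i) f)) := by
  have hbound : Tendsto (fun k => ‖(n k i : ℝ)⁻¹‖ₑ * (2 * eLpNorm f ∞ μ)) atTop (𝓝 0) := by
    have hinv : Tendsto (fun k => ‖(n k i : ℝ)⁻¹‖ₑ) atTop (𝓝 0) := by
      simpa [Function.comp_def] using (tendsto_inv_atTop_nhds_zero_nat (𝕜 := ℝ)).enorm.comp hn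
    simpa using ENNReal.Tendsto.mul_const hinv (.inr (mul_ne_top ofNat_ne_top hf))
  refine .of_tendsto_eLpNorm_top (g := 0) (tendsto_of_tendsto_of_tendsto_of_le_of_le
    tendsto_const_nhds hbound (fun _ => zero_le) fun k => ?_)
  rw [sub_zero]
  exact eLpNorm_map_cesaroMvPoly_sub_le hφ le_top (n k) i f

theorem auCauchy_map_cesaroMvPoly_of_fixed (hn : ∀ i, Tendsto (fun k => n k i) atTop atTop)
    {f : L1AddLinf μ} (hf : ∀ i, φ (MvPolynomial.X i) f = f) :
    AuCauchy μ fun k => ⇑(φ (cesaroMvPoly (n k)) f) := by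
  refine .of_tendsto_eLpNorm_top (g := f) (tendsto_const_nhds.congr' ?_)
  filter_upwards [eventually_all.2 fun i => (hn i).eventually_ne_atTop 0] with k hk
  have hone : MvPolynomial.eval 1 (cesaroMvPoly (n k)) = 1 := by
    rw [cesaroMvPoly, eval_one_tensorPoly]
    exact Finset.prod_eq_one fun i _ => eval_one_cesaroPoly (hk i)
  rw [map_apply_of_forall_map_X_apply_eq hf, hone, one_smul, sub_self, eLpNorm_zero]

theorem isClosed_auCauchySubmodule_cesaroMvPoly [Fact (1 ≤ p)] (hp : p ≠ ∞)
    (hφ : ∀ i, IsDunfordSchwartz (φ (MvPolynomial.X i)))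
    {c : ℝ} (hc : ∀ k i j, n k j ≠ 0 → (n k i : ℝ) ≤ c * n k j) :
    IsClosed (auCauchySubmodule p (fun k => φ (cesaroMvPoly (n k))) : Set (Lp ℝ p μ)) := by
  obtain ⟨C, hC, hweak⟩ := exists_hasWeakType_one_cesaroMvPoly hφ hc
  have hweak_p :=
    hweak.of_weakType_one (fun k => isDunfordSchwartz_map_cesaroMvPoly hφ (n k)) hp
  exact hweak_p.isClosed_auCauchySubmodule
    (mul_ne_top (ENNReal.rpow_ne_top_of_nonneg toReal_nonneg ofNat_ne_top) hC) hp

theorem auCauchySubmodule_cesaroMvPoly_two_eq_top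
    (hφ : ∀ i, IsDunfordSchwartz (φ (MvPolynomial.X i)))
    (hn : ∀ i, Tendsto (fun k => n k i) atTop atTop)
    {c : ℝ} (hc : ∀ k i j, n k j ≠ 0 → (n k i : ℝ) ≤ c * n k j) :
    auCauchySubmodule 2 (fun k => φ (cesaroMvPoly (n k))) = ⊤ := by
  set K := auCauchySubmodule 2 fun k => φ (cesaroMvPoly (n k))
  have hclosed : IsClosed (K : Set (Lp ℝ 2 μ)) :=
    isClosed_auCauchySubmodule_cesaroMvPoly ofNat_ne_top hφ hc
  refine eq_top_of_forall_sub_mem_of_fixed_mem (V := fun i => (hφ i).toLp)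
    (fun i => (hφ i).norm_toLp_le) hclosed (fun i f => ?_) fun f hf =>
      auCauchy_map_cesaroMvPoly_of_fixed hn fun i => congrArg ofLp (hf i)
  have hcomap : K.comap (1 - (hφ i).toLp : Lp ℝ 2 μ →L[ℝ] Lp ℝ 2 μ).toLinearMap = ⊤ :=
    eq_top_of_forall_indicatorConstLp_mem ofNat_ne_top
      (hclosed.preimage (ContinuousLinearMap.continuous _)) fun s hs hμs a =>
        auCauchy_map_cesaroMvPoly_sub hφ (hn i) (f := ofLp (indicatorConstLp 2 hs hμs a)) <| by
          rw [eLpNorm_congr_ae (coeFn_ofLp_indicatorConstLp hs hμs a)]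
          exact (memLp_indicator_const ∞ hs a (.inr hμs)).eLpNorm_ne_top
  exact Submodule.eq_top_iff'.1 hcomap f

theorem auCauchySubmodule_cesaroMvPoly_eq_top [Fact (1 ≤ p)] (hp : p ≠ ∞)
    (hφ : ∀ i, IsDunfordSchwartz (φ (MvPolynomial.X i)))
    (hn : ∀ i, Tendsto (fun k => n k i) atTop atTop)
    {c : ℝ} (hc : ∀ k i j, n k j ≠ 0 → (n k i : ℝ) ≤ c * n k j) :
    auCauchySubmodule p (fun k => φ (cesaroMvPoly (n k))) = ⊤ := by
  refine eq_top_of_forall_indicatorConstLp_mem hp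
    (isClosed_auCauchySubmodule_cesaroMvPoly hp hφ hc) fun s hs hμs a => ?_
  have hofLp : ofLp (indicatorConstLp p hs hμs a) = ofLp (indicatorConstLp 2 hs hμs a) :=
    L1AddLinf.ext <| (coeFn_ofLp_indicatorConstLp hs hμs a).trans
      (coeFn_ofLp_indicatorConstLp hs hμs a).symm
  rw [mem_auCauchySubmodule, hofLp, ← mem_auCauchySubmodule,
    auCauchySubmodule_cesaroMvPoly_two_eq_top hφ hn hc]
  trivial

end Convergence

section MultiparameterAverages

variable {μ : Measure Ω}

namespace IsPosDS

variable {T : (Ω →ₘ[μ] ℝ) → (Ω →ₘ[μ] ℝ)}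

theorem memL1pLinf_apply (hT : IsPosDS μ T) {f : Ω →ₘ[μ] ℝ} (hf : MemL1pLinf μ f) :
    MemL1pLinf μ (T f) := by
  obtain ⟨g, h, hg, hh, rfl⟩ := hf
  have hg_mem := memL1pLinf_of_eLpNorm_ne_top le_rfl hg
  have hh_mem := memL1pLinf_of_eLpNorm_ne_top le_top hh
  exact ⟨T g, T h, ne_top_of_le_ne_top hg (hT.norm_one g hg_mem),
    ne_top_of_le_ne_top hh (hT.norm_top h hh_mem), hT.map_add g h hg_mem hh_mem⟩

/-- The restriction of `T` to `L¹(μ) + L^∞(μ)`, where `T` is linear. -/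
def toEnd (hT : IsPosDS μ T) : Module.End ℝ (L1AddLinf μ) where
  toFun f := ⟨T f, hT.memL1pLinf_apply f.2⟩
  map_add' f g := Subtype.ext (hT.map_add f g f.2 g.2)
  map_smul' c f := Subtype.ext (hT.map_smul c f f.2)

theorem isDunfordSchwartz_toEnd (hT : IsPosDS μ T) : IsDunfordSchwartz hT.toEnd where
  map_nonneg f hf := hT.map_pos f f.2 hf
  eLpNorm_one_le f := hT.norm_one f f.2
  eLpNorm_top_le f := hT.norm_top f f.2

theorem coe_toEnd_pow_apply (hT : IsPosDS μ T) (k : ℕ) (f : L1AddLinf μ) :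
    ((hT.toEnd ^ k) f : Ω →ₘ[μ] ℝ) = T^[k] f := by
  rw [Module.End.pow_apply]
  exact Function.Semiconj.iterate_right (f := Subtype.val) (fun _ => rfl) k f

end IsPosDS

variable {d : ℕ} {T : Fin d → (Ω →ₘ[μ] ℝ) → (Ω →ₘ[μ] ℝ)}

theorem coe_prod_ofFn_toEnd_pow_apply (hT : ∀ i, IsPosDS μ (T i)) (k : Fin d → ℕ)
    (f : L1AddLinf μ) :
    ((List.ofFn fun i => (hT i).toEnd ^ k i).prod f : Ω →ₘ[μ] ℝ) = iterComp T k f := by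
  induction d with
  | zero => simp [iterComp]
  | succ d ih =>
    rw [List.ofFn_succ, List.prod_cons, Module.End.mul_apply, IsPosDS.coe_toEnd_pow_apply,
      ih fun i => hT i.succ, iterComp, iterComp, List.ofFn_succ]
    rfl

theorem cesaroMvPoly_eq_smul_sum {ι : Type*} [Fintype ι] [DecidableEq ι] (n : ι → ℕ) :
    cesaroMvPoly n = (∏ i, (n i : ℝ))⁻¹ •
      ∑ k ∈ Fintype.piFinset fun i => Finset.range (n i), ∏ i, MvPolynomial.X i ^ k i := by
  simp only [cesaroMvPoly, tensorPoly, aeval_cesaroPoly]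
  rw [Finset.prod_smul, Finset.prod_inv_distrib, Finset.prod_univ_sum]

theorem coe_map_cesaroMvPoly_apply (hT : ∀ i, IsPosDS μ (T i))
    {φ : MvPolynomial (Fin d) ℝ →ₐ[ℝ] Module.End ℝ (L1AddLinf μ)}
    (hφ : ∀ i, φ (MvPolynomial.X i) = (hT i).toEnd) (n : Fin d → ℕ) (f : L1AddLinf μ) :
    (φ (cesaroMvPoly n) f : Ω →ₘ[μ] ℝ) = multiAvg μ T n f := by
  have hmonomial (k : Fin d → ℕ) :
      (φ (∏ i, MvPolynomial.X i ^ k i) f : Ω →ₘ[μ] ℝ) = iterComp T k f := by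
    rw [← coe_prod_ofFn_toEnd_pow_apply hT, ← List.prod_ofFn, map_list_prod, List.map_ofFn]
    simp only [Function.comp_def, map_pow, hφ]
  simp only [cesaroMvPoly_eq_smul_sum, map_smul, map_sum, LinearMap.smul_apply,
    LinearMap.sum_apply, Submodule.coe_smul, Submodule.coe_sum, hmonomial, multiAvg]

theorem InSector.exists_le_mul {n : ℕ → Fin d → ℕ} (hn : InSector n) :
    ∃ c : ℝ, ∀ k i j, n k j ≠ 0 → (n k i : ℝ) ≤ c * n k j :=
  hn.imp fun _ hc k i j hj => (div_le_iff₀ (by positivity)).1 (hc k i j hj)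

end MultiparameterAverages

theorem multiparam_sector_au_Lp_general (μ : Measure Ω) {d : ℕ}
    (T : Fin d → (Ω →ₘ[μ] ℝ) → (Ω →ₘ[μ] ℝ)) (hT : ∀ i, IsPosDS μ (T i))
    (hcomm : ∀ i j, ∀ f : Ω →ₘ[μ] ℝ, MemL1pLinf μ f → T i (T j f) = T j (T i f))
    (p : ℝ≥0∞) (hp1 : 1 ≤ p) (hp2 : p ≠ ∞)
    (f : Ω →ₘ[μ] ℝ) (hf : eLpNorm f p μ ≠ ∞)
    (n : ℕ → Fin d → ℕ) (hn : ∀ i, Tendsto (fun k => n k i) atTop atTop)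
    (hsec : InSector n) :
    ∃ fhat : Ω →ₘ[μ] ℝ, eLpNorm fhat p μ ≠ ∞ ∧
      AuTendsto μ atTop (fun k => multiAvg μ T (n k) f) fhat := by
  have : Fact (1 ≤ p) := ⟨hp1⟩
  obtain ⟨φ, hφ⟩ := exists_mvPolynomial_algHom (R := ℝ) (a := fun i => (hT i).toEnd)
    fun i j => LinearMap.ext fun g => Subtype.ext (hcomm i j g g.2)
  have hφ_ds (i : Fin d) : IsDunfordSchwartz (φ (MvPolynomial.X i)) :=
    (hφ i).symm ▸ (hT i).isDunfordSchwartz_toEnd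
  obtain ⟨c, hc⟩ := hsec.exists_le_mul
  let g : L1AddLinf μ := ⟨f, memL1pLinf_of_eLpNorm_ne_top hp1 hf⟩
  have hcauchy : AuCauchy μ fun k => ⇑(φ (cesaroMvPoly (n k)) g) :=
    Submodule.eq_top_iff'.1 (auCauchySubmodule_cesaroMvPoly_eq_top hp2 hφ_ds hn hc)
      ⟨f, Lp.mem_Lp_iff_eLpNorm_lt_top.2 hf.lt_top⟩
  have hlim := hcauchy.exists_auTendsto hf fun k =>
    (isDunfordSchwartz_map_cesaroMvPoly hφ_ds (n k)).eLpNorm_le hp1 _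
  simpa only [coe_map_cesaroMvPoly_apply hT hφ] using hlim

/-- **Commutative case of Corollary 5.9**: for a commuting family of positive
Dunford–Schwartz operators `T₁,…,T_d` on a σ-finite measure space, `1 ≤ p < ∞`,
`f ∈ L^p(μ)`, and any sequence `n(k) → ∞` remaining in a sector of `ℕ^d`, the averages
`A_{n(k)}(f)` converge almost uniformly to some `f̂ ∈ L^p(μ)`. -/
theorem multiparam_sector_au_Lp (μ : Measure Ω) [SigmaFinite μ] {d : ℕ}
    (T : Fin d → (Ω →ₘ[μ] ℝ) → (Ω →ₘ[μ] ℝ)) (hT : ∀ i, IsPosDS μ (T i))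
    (hcomm : ∀ i j, ∀ f : Ω →ₘ[μ] ℝ, MemL1pLinf μ f → T i (T j f) = T j (T i f))
    (p : ℝ≥0∞) (hp1 : 1 ≤ p) (hp2 : p ≠ ∞)
    (f : Ω →ₘ[μ] ℝ) (hf : eLpNorm f p μ ≠ ∞)
    (n : ℕ → Fin d → ℕ) (hn : ∀ i, Tendsto (fun k => n k i) atTop atTop)
    (hsec : InSector n) :
    ∃ fhat : Ω →ₘ[μ] ℝ, eLpNorm fhat p μ ≠ ∞ ∧
      AuTendsto μ atTop (fun k => multiAvg μ T (n k) f) fhat := by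
  exact multiparam_sector_au_Lp_general μ T hT hcomm p hp1 hp2 f hf n hn hsec
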